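/- arXiv:1006.3266 — 5 statements merged into one kernel-verified Lean document; each statement's English description precedes it below -/
import Mathlib

section
/- If H is an abelian subgroup of Sym_n such that the stabilizers of 1 and of n in H are both trivial, then the monoid S_n(H) is cancellative. -/
/-- The word `a_{σ(1)} ⋯ a_{σ(n)}` in the free monoid on `n` generators. -/
def permWord {n : ℕ} (σ : Equiv.Perm (Fin n)) : FreeMonoid (Fin n) :=
  FreeMonoid.ofList (List.ofFn fun i => σ i)

/-- The defining relations of `S_n(H)`. -/
def snRel (n : ℕ) (H : Set (Equiv.Perm (Fin n)))
    (a b : FreeMonoid (Fin n)) : Prop :=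
  ∃ σ ∈ H, a = permWord 1 ∧ b = permWord σ

/-- The congruence generated by the relations of `S_n(H)`. -/
def snCon (n : ℕ) (H : Set (Equiv.Perm (Fin n))) : Con (FreeMonoid (Fin n)) :=
  conGen (snRel n H)

/-- The monoid `S_n(H)` presented by `a_1,…,a_n` with relations
`a_1⋯a_n = a_{σ(1)}⋯a_{σ(n)}` for `σ ∈ H`. -/
abbrev SnMonoid (n : ℕ) (H : Set (Equiv.Perm (Fin n))) : Type :=
  (snCon n H).Quotient

/-- The canonical projection `π : FM_n → S_n(H)`. -/
def snPi (n : ℕ) (H : Set (Equiv.Perm (Fin n))) :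
    FreeMonoid (Fin n) →* SnMonoid n H :=
  (snCon n H).mk'

/-- The generator `a_i` of `S_n(H)`. -/
def aGen (n : ℕ) (H : Set (Equiv.Perm (Fin n))) (i : Fin n) : SnMonoid n H :=
  snPi n H (FreeMonoid.of i)

/-- The element `z = a_1 a_2 ⋯ a_n` of `S_n(H)`. -/
def zElem (n : ℕ) (H : Set (Equiv.Perm (Fin n))) : SnMonoid n H :=
  snPi n H (permWord 1)

/-- A (two-sided) ideal-like subset `I` of a monoid is prime if for all `u, v ∉ I`
there is `s` with `u * s * v ∉ I`. -/
def MonoidIdeal.IsPrime {M : Type*} [Monoid M] (I : Set M) : Prop :=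
  ∀ u v : M, u ∉ I → v ∉ I → ∃ s : M, u * s * v ∉ I


/-- Congruence on words generated by identifying all the words of `R`. -/
inductive WRel {α : Type} (R : Set (List α)) : List α → List α → Prop
  | base {p q : List α} (hp : p ∈ R) (hq : q ∈ R) : WRel R p q
  | refl (p : List α) : WRel R p p
  | symm {p q : List α} (h : WRel R p q) : WRel R q p
  | trans {p q r : List α} (h : WRel R p q) (h' : WRel R q r) : WRel R p r
  | mul {p q r s : List α} (h : WRel R p q) (h' : WRel R r s) : WRel R (p ++ r) (q ++ s)

theorem WRel.length_eq {α : Type} {R : Set (List α)} {n : ℕ}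
    (hlen : ∀ w ∈ R, w.length = n) {u v : List α} (h : WRel R u v) : u.length = v.length := by
  induction h with
  | base hp hq => rw [hlen _ hp, hlen _ hq]
  | refl p => rfl
  | symm _ ih => exact ih.symm
  | trans _ _ ih ih' => exact ih.trans ih'
  | mul _ _ ih ih' => simp [ih, ih']

theorem WRel.cons {α : Type} {R : Set (List α)} (a : α) {u v : List α} (h : WRel R u v) :
    WRel R (a :: u) (a :: v) := WRel.mul (WRel.refl [a]) h

theorem WRel.reverse {α : Type} {R : Set (List α)} {u v : List α} (h : WRel R u v) :
    WRel (List.reverse '' R) u.reverse v.reverse := by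
  induction h with
  | base hp hq => exact .base ⟨_, hp, rfl⟩ ⟨_, hq, rfl⟩
  | refl p => exact .refl _
  | symm _ ih => exact ih.symm
  | trans _ _ ih ih' => exact ih.trans ih'
  | mul _ _ ih ih' => simpa using ih'.mul ih

/-- How two equivalent words are related with respect to their first letters. -/
def HeadRel {α : Type} (R : Set (List α)) (W W' : List α) : Prop :=
  (W = [] ∧ W' = []) ∨
  (∃ a u v, W = a :: u ∧ W' = a :: v ∧ WRel R u v) ∨
  (∃ a b s t x u v, a :: s ∈ R ∧ b :: t ∈ R ∧ W = a :: u ∧ W' = b :: v ∧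
    WRel R u (s ++ x) ∧ WRel R v (t ++ x))

theorem WRel.headRel {α : Type} {R : Set (List α)} {n : ℕ}
    (hlen : ∀ w ∈ R, w.length = n) (hne : [] ∉ R)
    (hhead : ∀ a s t, a :: s ∈ R → a :: t ∈ R → s = t) (L : ℕ)
    (IH : ∀ p u v : List α, (p ++ u).length < L → WRel R (p ++ u) (p ++ v) → WRel R u v)
    {W W' : List α} (h : WRel R W W') : W.length ≤ L → HeadRel R W W' := by
  induction h with
  | @base p q hp hq =>
    intro _
    match p, q, hp, hq with
    | [], _, hp, _ => exact absurd hp hne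
    | _ :: _, [], _, hq => exact absurd hq hne
    | a :: s, b :: t, hp, hq =>
      exact .inr (.inr ⟨a, b, s, t, [], s, t, hp, hq, rfl, rfl,
        by simpa using WRel.refl s, by simpa using WRel.refl t⟩)
  | refl p =>
    intro _
    match p with
    | [] => exact .inl ⟨rfl, rfl⟩
    | a :: u => exact .inr (.inl ⟨a, u, u, rfl, rfl, .refl u⟩)
  | symm h ih =>
    intro hl
    rcases ih (by rw [h.length_eq hlen]; exact hl) with
      ⟨h1, h2⟩ | ⟨a, u, v, h1, h2, h3⟩ | ⟨a, b, s, t, x, u, v, h1, h2, h3, h4, h5, h6⟩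
    · exact .inl ⟨h2, h1⟩
    · exact .inr (.inl ⟨a, v, u, h2, h1, h3.symm⟩)
    · exact .inr (.inr ⟨b, a, t, s, x, v, u, h2, h1, h4, h3, h6, h5⟩)
  | @trans p q r h h' ih ih' =>
    intro hl
    have hl' : q.length ≤ L := by rw [← h.length_eq hlen]; exact hl
    rcases ih hl with
      ⟨h1, h2⟩ | ⟨a, u, v, h1, h2, h3⟩ | ⟨a, b, s, t, x, u, v, h1, h2, h3, h4, h5, h6⟩
    · subst h1 h2; exact ih' hl'
    · subst h1 h2
      rcases ih' hl' with
        ⟨k1, k2⟩ | ⟨a', u', v', k1, k2, k3⟩ | ⟨a', b', s', t', x', u', v', k1, k2, k3, k4, k5, k6⟩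
      · simp at k1
      · injection k1 with e1 e2
        subst e1 e2 k2
        exact .inr (.inl ⟨_, _, _, rfl, rfl, h3.trans k3⟩)
      · injection k3 with e1 e2
        subst e1 e2 k4
        exact .inr (.inr ⟨_, _, _, _, _, _, _, k1, k2, rfl, rfl, h3.trans k5, k6⟩)
    · subst h3 h4
      rcases ih' hl' with
        ⟨k1, k2⟩ | ⟨a', u', v', k1, k2, k3⟩ | ⟨a', b', s', t', x', u', v', k1, k2, k3, k4, k5, k6⟩
      · simp at k1
      · injection k1 with e1 e2
        subst e1 e2 k2
        exact .inr (.inr ⟨_, _, _, _, _, _, _, h1, h2, rfl, rfl, h5, k3.symm.trans h6⟩)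
      · injection k3 with e1 e2
        subst e1 e2 k4
        have e := hhead _ _ _ h2 k1
        subst e
        have hx : WRel R x x' := by
          refine IH t x x' ?_ (h6.symm.trans k5)
          rw [← h6.length_eq hlen]
          simp at hl'
          omega
        exact .inr (.inr ⟨_, _, _, _, x', _, _, h1, k2, rfl, rfl,
          h5.trans ((WRel.refl s).mul hx), k6⟩)
  | @mul p q r s' h h' ih ih' =>
    intro hl
    simp only [List.length_append] at hl
    rcases ih (by omega) with
      ⟨h1, h2⟩ | ⟨a, u, v, h1, h2, h3⟩ | ⟨a, b, s, t, x, u, v, h1, h2, h3, h4, h5, h6⟩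
    · subst h1 h2
      exact ih' (by omega)
    · subst h1 h2
      exact .inr (.inl ⟨a, u ++ r, v ++ s', rfl, rfl, h3.mul h'⟩)
    · subst h3 h4
      refine .inr (.inr ⟨a, b, s, t, x ++ r, u ++ r, v ++ s', h1, h2, rfl, rfl, ?_, ?_⟩)
      · simpa using h5.mul (WRel.refl r)
      · simpa using h6.mul h'.symm

theorem WRel.cancel_left {α : Type} {R : Set (List α)} {n : ℕ}
    (hlen : ∀ w ∈ R, w.length = n) (hne : [] ∉ R)
    (hhead : ∀ a s t, a :: s ∈ R → a :: t ∈ R → s = t) (L : ℕ) :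
    ∀ p u v : List α, (p ++ u).length < L → WRel R (p ++ u) (p ++ v) → WRel R u v := by
  induction L with
  | zero => intro p u v h; omega
  | succ L IH =>
    intro p u v hl h
    match p with
    | [] => exact h
    | a :: p =>
      simp only [List.cons_append, List.length_cons] at hl h
      have key : WRel R (p ++ u) (p ++ v) := by
        rcases h.headRel hlen hne hhead L IH (by simp only [List.length_cons]; omega) with
          ⟨h1, h2⟩ | ⟨a, u, v, h1, h2, h3⟩ | ⟨a, b, s, t, x, u, v, h1, h2, h3, h4, h5, h6⟩
        · simp at h1
        · injection h1 with e1 e2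
          injection h2 with e3 e4
          rw [e2, e4]; exact h3
        · injection h3 with e1 e2
          injection h4 with e3 e4
          subst e1 e3
          have e := hhead _ _ _ h1 h2
          subst e
          rw [e2, e4]; exact h5.trans h6.symm
      exact IH p u v (by omega) key

/-- The set of defining words. -/
def wordSet (n : ℕ) (H : Subgroup (Equiv.Perm (Fin n))) : Set (List (Fin n)) :=
  {w | ∃ σ ∈ H, w = List.ofFn fun i => σ i}

theorem snCon_iff (n : ℕ) (H : Subgroup (Equiv.Perm (Fin n))) (u v : FreeMonoid (Fin n)) :
    snCon n H u v ↔ WRel (wordSet n H) u.toList v.toList := by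
  constructor
  · intro h
    change ConGen.Rel _ u v at h
    induction h with
    | of a b h =>
      obtain ⟨σ, hσ, rfl, rfl⟩ := h
      exact .base ⟨1, H.one_mem, rfl⟩ ⟨σ, hσ, rfl⟩
    | refl => exact .refl _
    | symm _ ih => exact ih.symm
    | trans _ _ ih ih' => exact ih.trans ih'
    | mul _ _ ih ih' =>
      simp only [FreeMonoid.toList_mul]
      exact ih.mul ih'
  · have key : ∀ p q : List (Fin n), WRel (wordSet n H) p q →
        snCon n H (FreeMonoid.ofList p) (FreeMonoid.ofList q) := by
      intro p q h
      induction h with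
      | base hp hq =>
        obtain ⟨σ, hσ, rfl⟩ := hp
        obtain ⟨τ, hτ, rfl⟩ := hq
        have a1 : snCon n H (permWord 1) (permWord σ) := ConGen.Rel.of _ _ ⟨σ, hσ, rfl, rfl⟩
        have a2 : snCon n H (permWord 1) (permWord τ) := ConGen.Rel.of _ _ ⟨τ, hτ, rfl, rfl⟩
        exact (snCon n H).trans ((snCon n H).symm a1) a2
      | refl p => exact (snCon n H).refl _
      | symm _ ih => exact (snCon n H).symm ih
      | trans _ _ ih ih' => exact (snCon n H).trans ih ih'
      | mul _ _ ih ih' =>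
        simp only [FreeMonoid.ofList_append]
        exact (snCon n H).mul ih ih'
    intro h
    simpa using key _ _ h

theorem wordSet_eq_of (n : ℕ) (H : Subgroup (Equiv.Perm (Fin n))) (k : Fin n)
    (hk : ∀ σ ∈ H, σ k = k → σ = 1) {σ τ : Equiv.Perm (Fin n)} (hσ : σ ∈ H) (hτ : τ ∈ H)
    (h : σ k = τ k) : σ = τ := by
  have := hk (τ⁻¹ * σ) (H.mul_mem (H.inv_mem hτ) hσ) (by simp [h])
  exact (inv_mul_eq_one.mp this).symm

theorem stmt1 (n : ℕ) (hn : 1 ≤ n) (H : Subgroup (Equiv.Perm (Fin n)))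
    (hab : ∀ σ ∈ H, ∀ τ ∈ H, σ * τ = τ * σ)
    (h1 : ∀ σ ∈ H, σ ⟨0, by omega⟩ = ⟨0, by omega⟩ → σ = 1)
    (h2 : ∀ σ ∈ H, σ ⟨n - 1, by omega⟩ = ⟨n - 1, by omega⟩ → σ = 1) :
    ∀ a b c : SnMonoid n ↑H, (a * b = a * c → b = c) ∧ (b * a = c * a → b = c) := by
  have hlen : ∀ w ∈ wordSet n H, w.length = n := by
    rintro w ⟨σ, _, rfl⟩; simp
  have hne : [] ∉ wordSet n H := fun h => by
    have := hlen _ h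
    simp at this; omega
  have hlen' : ∀ w ∈ List.reverse '' wordSet n H, w.length = n := by
    rintro w ⟨v, hv, rfl⟩; simpa using hlen v hv
  have hne' : [] ∉ List.reverse '' wordSet n H := fun h => by
    have := hlen' _ h
    simp at this; omega
  have hhead : ∀ a s t, a :: s ∈ wordSet n H → a :: t ∈ wordSet n H → s = t := by
    rintro a s t ⟨σ, hσ, es⟩ ⟨τ, hτ, et⟩
    have e1 : (a :: s)[0]? = some (σ ⟨0, by omega⟩) := by
      rw [es, List.getElem?_ofFn]; simp; omega
    have e2 : (a :: t)[0]? = some (τ ⟨0, by omega⟩) := by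
      rw [et, List.getElem?_ofFn]; simp; omega
    simp at e1 e2
    have e := wordSet_eq_of n H _ h1 hσ hτ (e1.symm.trans e2)
    subst e
    rw [← et] at es
    injection es
  have hhead' : ∀ a s t, a :: s ∈ List.reverse '' wordSet n H →
      a :: t ∈ List.reverse '' wordSet n H → s = t := by
    rintro a s t ⟨p, ⟨σ, hσ, rfl⟩, es⟩ ⟨q, ⟨τ, hτ, rfl⟩, et⟩
    have e1 : (a :: s)[0]? = some (σ ⟨n - 1, by omega⟩) := by
      rw [← es, List.getElem?_reverse (by simp; omega), List.getElem?_ofFn]; simp; omega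
    have e2 : (a :: t)[0]? = some (τ ⟨n - 1, by omega⟩) := by
      rw [← et, List.getElem?_reverse (by simp; omega), List.getElem?_ofFn]; simp; omega
    simp at e1 e2
    have e := wordSet_eq_of n H _ h2 hσ hτ (e1.symm.trans e2)
    subst e
    rw [es] at et
    injection et
  intro a b c
  induction a using Con.induction_on with | _ a
  induction b using Con.induction_on with | _ b
  induction c using Con.induction_on with | _ c
  constructor
  · intro h
    rw [← Con.coe_mul, ← Con.coe_mul, Con.eq, snCon_iff] at h
    rw [Con.eq, snCon_iff]
    simp only [FreeMonoid.toList_mul] at h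
    exact WRel.cancel_left hlen hne hhead _ _ _ _ (Nat.lt_succ_self _) h
  · intro h
    rw [← Con.coe_mul, ← Con.coe_mul, Con.eq, snCon_iff] at h
    rw [Con.eq, snCon_iff]
    simp only [FreeMonoid.toList_mul] at h
    have h' := h.reverse
    simp only [List.reverse_append] at h'
    have h3 := (WRel.cancel_left hlen' hne' hhead' _ _ _ _ (Nat.lt_succ_self _) h').reverse
    simpa [Set.image_image] using h3
end

section
/- Let H be an abelian subgroup of Sym_n with (1,2,...,n) ∉ H, n ≥ 3, suppose the stabilizer of n in H is trivial, and let π : FM_n → S_n(H) be the canonical projection from the free monoid on x_1,...,x_n. If w ∈ FM_n and 1 ≤ i,j ≤ n are such that π(w x_i x_j) ∈ S z, where z = a_1⋯a_n, then there exists σ ∈ H with i = σ(n−1) and j = σ(n). -/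
/-- One rewriting step. -/
def stepH {n : ℕ} (H : Subgroup (Equiv.Perm (Fin n))) (u v : List (Fin n)) : Prop :=
  ∃ a b : List (Fin n), ∃ σ ∈ H, ∃ τ ∈ H,
    u = a ++ List.ofFn (fun i => σ i) ++ b ∧ v = a ++ List.ofFn (fun i => τ i) ++ b

/-- Rewriting equivalence on words. -/
def relH {n : ℕ} (H : Subgroup (Equiv.Perm (Fin n))) : List (Fin n) → List (Fin n) → Prop :=
  Relation.ReflTransGen (stepH H)

/-- The first `r` letters of the word of `σ`. -/
def pre {n : ℕ} (σ : Equiv.Perm (Fin n)) (r : ℕ) : List (Fin n) :=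
  (List.ofFn (fun i => σ i)).take r

theorem pre_succ {n : ℕ} (σ : Equiv.Perm (Fin n)) (r : ℕ) (hr : r < n) :
    pre σ (r + 1) = pre σ r ++ [σ ⟨r, hr⟩] := by
  unfold pre
  rw [List.take_add_one]
  simp [hr]

theorem pre_full {n : ℕ} (σ : Equiv.Perm (Fin n)) :
    List.ofFn (fun i => σ i) = pre σ n := by
  unfold pre
  rw [List.take_of_length_le]; simp

theorem pre_last {n : ℕ} (hn : 2 < n) (σ : Equiv.Perm (Fin n)) :
    List.ofFn (fun i => σ i) = pre σ (n - 1) ++ [σ ⟨n - 1, by omega⟩] := by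
  rw [pre_full, ← pre_succ σ (n - 1) (by omega)]
  congr 1; omega

theorem relH_symm {n : ℕ} {H : Subgroup (Equiv.Perm (Fin n))} {u v : List (Fin n)}
    (h : relH H u v) : relH H v u := by
  have : Std.Symm (stepH H) := ⟨fun u v ⟨a, b, σ, hσ, τ, hτ, h1, h2⟩ =>
    ⟨a, b, τ, hτ, σ, hσ, h2, h1⟩⟩
  exact Relation.ReflTransGen.stdSymm.symm _ _ h

theorem inv_app {n : ℕ} (τ : Equiv.Perm (Fin n)) (x : Fin n) : τ⁻¹ (τ x) = x := by simp

theorem transfer {n : ℕ} {σ τ : Equiv.Perm (Fin n)} {x y a b : Fin n} (h : σ x = τ y)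
    (ha : a.1 = x.1) (hb : b.1 = y.1) : σ a = τ b := by
  rw [Fin.ext ha, Fin.ext hb, h]

theorem relH_mul {n : ℕ} {H : Subgroup (Equiv.Perm (Fin n))} {u v u' v' : List (Fin n)}
    (h : relH H u v) (h' : relH H u' v') : relH H (u ++ u') (v ++ v') := by
  have h1 : relH H (u ++ u') (v ++ u') := by
    refine Relation.ReflTransGen.lift (fun x => x ++ u') ?_ _ _ h
    rintro x y ⟨a, b, σ, hσ, τ, hτ, rfl, rfl⟩
    exact ⟨a, b ++ u', σ, hσ, τ, hτ, by simp, by simp⟩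
  have h2 : relH H (v ++ u') (v ++ v') := by
    refine Relation.ReflTransGen.lift (fun x => v ++ x) ?_ _ _ h'
    rintro x y ⟨a, b, σ, hσ, τ, hτ, rfl, rfl⟩
    exact ⟨v ++ a, b, σ, hσ, τ, hτ, by simp, by simp⟩
  exact h1.trans h2

/-- The rewriting equivalence as a congruence. -/
def conH {n : ℕ} (H : Subgroup (Equiv.Perm (Fin n))) : Con (FreeMonoid (Fin n)) where
  r u v := relH H u.toList v.toList
  iseqv := ⟨fun _ => Relation.ReflTransGen.refl, fun h => relH_symm h, fun h h' => h.trans h'⟩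
  mul' h h' := by
    simpa only [FreeMonoid.toList_mul] using relH_mul h h'

theorem relH_of_snPi {n : ℕ} {H : Subgroup (Equiv.Perm (Fin n))} {u v : FreeMonoid (Fin n)}
    (h : snPi n (H : Set (Equiv.Perm (Fin n))) u = snPi n (H : Set (Equiv.Perm (Fin n))) v) :
    relH H u.toList v.toList := by
  have h1 : snCon n (H : Set (Equiv.Perm (Fin n))) u v := (Con.eq _).1 h
  have h2 : snCon n (H : Set (Equiv.Perm (Fin n))) ≤ conH H := by
    apply Con.conGen_le.2
    rintro a b ⟨σ, hσ, rfl, rfl⟩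
    exact Relation.ReflTransGen.single ⟨[], [], 1, H.one_mem, σ, hσ, by simp [permWord],
      by simp [permWord]⟩
  exact h2 h1

theorem peel {n : ℕ} (hn : 2 < n) {H : Subgroup (Equiv.Perm (Fin n))} {p : List (Fin n)}
    {x : Fin n} {q : List (Fin n)} (h : relH H (p ++ [x]) q) :
    ∃ q' y, q = q' ++ [y] ∧ ((relH H p q' ∧ x = y) ∨
      ∃ a₁ a₂ : List (Fin n), ∃ τ₁ ∈ H, ∃ τ₂ ∈ H,
        relH H p (a₁ ++ pre τ₁ (n - 1)) ∧ x = τ₁ ⟨n - 1, by omega⟩ ∧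
        relH H q' (a₂ ++ pre τ₂ (n - 1)) ∧ y = τ₂ ⟨n - 1, by omega⟩) := by
  induction h with
  | refl => exact ⟨p, x, rfl, Or.inl ⟨Relation.ReflTransGen.refl, rfl⟩⟩
  | @tail q r _ hs ih =>
    obtain ⟨q', y, rfl, ih⟩ := ih
    obtain ⟨a, b, α, hα, β, hβ, h1, h2⟩ := hs
    rcases List.eq_nil_or_concat b with rfl | ⟨b', c, hb⟩
    · rw [List.append_nil, pre_last hn, ← List.append_assoc] at h1 h2
      obtain ⟨rfl, h1⟩ := List.append_inj' h1 rfl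
      have h1 : y = α ⟨n - 1, by omega⟩ := by simpa using h1
      refine ⟨_, _, h2, Or.inr ?_⟩
      rcases ih with ⟨ih, rfl⟩ | ⟨a₁, a₂, τ₁, hτ₁, τ₂, hτ₂, i1, i2, i3, i4⟩
      · exact ⟨a, a, α, hα, β, hβ, ih, h1, Relation.ReflTransGen.refl, rfl⟩
      · exact ⟨a₁, a, τ₁, hτ₁, β, hβ, i1, i2, Relation.ReflTransGen.refl, rfl⟩
    · have hb : b = b' ++ [c] := by simpa using hb
      subst hb
      rw [← List.append_assoc] at h1 h2
      obtain ⟨rfl, h1⟩ := List.append_inj' h1 rfl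
      have h1 : y = c := by simpa using h1
      subst h1
      have hst : stepH H (a ++ List.ofFn (fun i => α i) ++ b')
          (a ++ List.ofFn (fun i => β i) ++ b') := ⟨a, b', α, hα, β, hβ, rfl, rfl⟩
      refine ⟨_, _, h2, ?_⟩
      rcases ih with ⟨ih, rfl⟩ | ⟨a₁, a₂, τ₁, hτ₁, τ₂, hτ₂, i1, i2, i3, i4⟩
      · exact Or.inl ⟨ih.tail hst, rfl⟩
      · refine Or.inr ⟨a₁, a₂, τ₁, hτ₁, τ₂, hτ₂, i1, i2, ?_, i4⟩
        exact (relH_symm (Relation.ReflTransGen.single hst)).trans i3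

/-- Elements of `H` agreeing at a point sent to `z` by an element of `H` are equal. -/
theorem semireg {n : ℕ} {H : Subgroup (Equiv.Perm (Fin n))} (z : Fin n)
    (hstab : ∀ σ ∈ H, σ z = z → σ = 1) {g f : Equiv.Perm (Fin n)} (hg : g ∈ H) (hf : f ∈ H)
    (x : Fin n) (h1 : g x = z) (h2 : f x = z) : g = f := by
  have := hstab (g * f⁻¹) (H.mul_mem hg (H.inv_mem hf)) (by
    rw [Equiv.Perm.mul_apply, ← h2, inv_app, h1, h2])
  exact mul_inv_eq_one.1 this

theorem key {n : ℕ} (hn : 2 < n) {H : Subgroup (Equiv.Perm (Fin n))}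
    (hab : ∀ σ ∈ H, ∀ τ ∈ H, σ * τ = τ * σ)
    (hstab : ∀ σ ∈ H, σ ⟨n - 1, by omega⟩ = ⟨n - 1, by omega⟩ → σ = 1)
    (L : ℕ) : ∀ (r k d : ℕ), r + k + d = n → 1 ≤ k →
      ∀ (s s' : List (Fin n)) (σ τ : Equiv.Perm (Fin n)), σ ∈ H → τ ∈ H → s.length + r = L →
      relH H (s ++ pre σ r) (s' ++ pre τ (r + d)) →
      (∀ a b : Fin n, r ≤ a.1 → a.1 < r + k → b.1 = a.1 + d → σ a = τ b) →
      ∀ a b : Fin n, a.1 < r + k → b.1 = a.1 + d → σ a = τ b := by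
  induction L with
  | zero =>
    intro r k d hr hk s s' σ τ hσ hτ hL hrel hyp a b ha hb
    exact hyp a b (by omega) ha hb
  | succ L ih =>
    intro r k d hr hk s s' σ τ hσ hτ hL hrel hyp
    rcases r with _ | r
    · intro a b ha hb
      exact hyp a b (by omega) ha hb
    rw [show r + 1 + d = r + d + 1 by omega, pre_succ σ r (by omega),
      pre_succ τ (r + d) (by omega), ← List.append_assoc, ← List.append_assoc] at hrel
    obtain ⟨q', y, hq, hc⟩ := peel hn hrel
    obtain ⟨rfl, hy⟩ := List.append_inj' hq rfl
    have hy : τ ⟨r + d, by omega⟩ = y := by simpa using hy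
    subst hy
    rcases hc with ⟨h1, h2⟩ | ⟨a₁, a₂, τ₁, hτ₁, τ₂, hτ₂, i1, i2, i3, i4⟩
    · have := ih r (k + 1) d (by omega) (by omega) s s' σ τ hσ hτ (by omega) h1 (by
        intro a b h3 h4 h5
        by_cases h6 : a.1 = r
        · exact transfer h2 (by grind) (by grind)
        · exact hyp a b (by omega) (by omega) h5)
      intro a b ha hb
      exact this a b (by omega) hb
    · have c1 := ih r 1 (d + k) (by omega) le_rfl s a₁ σ τ₁ hσ hτ₁ (by omega)
        (by rw [show r + (d + k) = n - 1 by omega]; exact i1) (by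
          intro a b h3 h4 h5
          exact transfer i2 (by grind) (by grind))
      have hlen : ∀ u v : List (Fin n), relH H u v → u.length = v.length := by
        intro u v h
        induction h with
        | refl => rfl
        | tail _ hs ih =>
          obtain ⟨a, b, α, hα, β, hβ, rfl, rfl⟩ := hs
          rw [ih]; simp
      have hl := hlen _ _ hrel
      have hpl : ∀ (σ : Equiv.Perm (Fin n)) (t : ℕ), t ≤ n → (pre σ t).length = t := by
        intro σ t ht
        simp [pre, ht]
      simp only [List.length_append, List.length_singleton, hpl σ r (by omega),
        hpl τ (r + d) (by omega)] at hl
      have c2 := ih (r + d) 1 k (by omega) le_rfl s' a₂ τ τ₂ hτ hτ₂ (by omega)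
        (by rw [show r + d + k = n - 1 by omega]; exact i3) (by
          intro a b h3 h4 h5
          exact transfer i4 (by grind) (by grind))
      -- `e = τ₂⁻¹τ`, `h = τ⁻¹σ`, `g = τ₁⁻¹σ`
      have he : τ₂⁻¹ * τ ∈ H := H.mul_mem (H.inv_mem hτ₂) hτ
      have hh : τ⁻¹ * σ ∈ H := H.mul_mem (H.inv_mem hτ) hσ
      have hg : τ₁⁻¹ * σ ∈ H := H.mul_mem (H.inv_mem hτ₁) hσ
      have E : (τ⁻¹ * σ) * (τ₂⁻¹ * τ) = τ₁⁻¹ * σ := by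
        refine semireg ⟨n - 1, by omega⟩ hstab (H.mul_mem hh he) hg ⟨r, by omega⟩ ?_ ?_
        · rw [Equiv.Perm.mul_apply, Equiv.Perm.mul_apply τ₂⁻¹,
            c2 ⟨r, by omega⟩ ⟨r + k, by omega⟩ (by grind) rfl, inv_app,
            Equiv.Perm.mul_apply,
            hyp ⟨r + k, by omega⟩ ⟨n - 1, by omega⟩ (by grind) (by grind)
              (by grind), inv_app]
        · rw [Equiv.Perm.mul_apply, i2, inv_app]
      rw [hab _ hh _ he] at E
      have E' : τ₂⁻¹ * σ = τ₁⁻¹ * σ := by rw [← E]; group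
      have E2 : τ₂ = τ₁ := inv_injective (mul_right_cancel E')
      subst E2
      intro a b ha hb
      by_cases h6 : a.1 = r + 1 + k - 1
      · exact hyp a b (by omega) ha hb
      by_cases h7 : r + 1 ≤ a.1
      · exact hyp a b h7 ha hb
      rw [c1 a ⟨a.1 + (d + k), by omega⟩ (by omega) rfl,
        c2 b ⟨b.1 + k, by omega⟩ (by omega) rfl]
      congr 2; omega

theorem stmt9 (n : ℕ) (hn : 3 ≤ n) (H : Subgroup (Equiv.Perm (Fin n)))
    (hab : ∀ σ ∈ H, ∀ τ ∈ H, σ * τ = τ * σ) (hrot : finRotate n ∉ H)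
    (hstab : ∀ σ ∈ H, σ ⟨n - 1, by omega⟩ = ⟨n - 1, by omega⟩ → σ = 1)
    (w : FreeMonoid (Fin n)) (i j : Fin n)
    (h : ∃ s : SnMonoid n ↑H,
      snPi n ↑H (w * FreeMonoid.of i * FreeMonoid.of j) = s * zElem n ↑H) :
    ∃ σ ∈ H, i = σ ⟨n - 2, by omega⟩ ∧ j = σ ⟨n - 1, by omega⟩ := by
  obtain ⟨s, hs⟩ := h
  obtain ⟨s, rfl⟩ := Con.mk'_surjective s
  have h0 : snPi n (H : Set (Equiv.Perm (Fin n))) (s * permWord 1) =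
      snPi n (H : Set (Equiv.Perm (Fin n))) (w * FreeMonoid.of i * FreeMonoid.of j) := by
    rw [hs, map_mul]; rfl
  have h1 := relH_of_snPi h0
  simp only [FreeMonoid.toList_mul, FreeMonoid.toList_of, permWord, FreeMonoid.toList_ofList]
    at h1
  rw [pre_last hn, ← List.append_assoc] at h1
  obtain ⟨q, y, hq, hc⟩ := peel hn h1
  obtain ⟨rfl, hy⟩ := List.append_inj' hq rfl
  have hy : j = y := by simpa using hy
  subst hy
  have h2 : ∃ a : List (Fin n), ∃ τ ∈ H,
      relH H (w.toList ++ [i]) (a ++ pre τ (n - 1)) ∧ j = τ ⟨n - 1, by omega⟩ := by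
    rcases hc with ⟨h3, h4⟩ | ⟨a₁, a₂, τ₁, hτ₁, τ₂, hτ₂, i1, i2, i3, i4⟩
    · exact ⟨_, 1, H.one_mem, relH_symm h3, h4.symm⟩
    · exact ⟨a₂, τ₂, hτ₂, i3, i4⟩
  obtain ⟨a, τ, hτ, h3, h4⟩ := h2
  rw [show n - 1 = n - 2 + 1 by omega, pre_succ τ (n - 2) (by omega), ← List.append_assoc] at h3
  obtain ⟨q, y, hq, hc⟩ := peel hn h3
  obtain ⟨rfl, hy⟩ := List.append_inj' hq rfl
  have hy : τ ⟨n - 2, by omega⟩ = y := by simpa using hy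
  subst hy
  refine ⟨τ, hτ, ?_, h4⟩
  rcases hc with ⟨_, h5⟩ | ⟨a₁, a₂, τ₁, hτ₁, τ₂, hτ₂, i1, i2, i3, i4⟩
  · exact h5
  exfalso
  have K := key hn hab hstab _ (n - 2) 1 1 (by omega) le_rfl a a₂ τ τ₂ hτ hτ₂ rfl
    (by rw [show n - 2 + 1 = n - 1 by omega]; exact i3) (by
      intro a b h3 h4 h5
      exact transfer i4 (by grind) (by grind))
  apply hrot
  have hm : τ₂⁻¹ * τ ∈ H := H.mul_mem (H.inv_mem hτ₂) hτ
  have hlt : ∀ x : Fin n, x.1 < n - 1 → (τ₂⁻¹ * τ) x = finRotate n x := by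
    intro x hx
    rw [Equiv.Perm.mul_apply, K x ⟨x.1 + 1, by omega⟩ (by omega) rfl, inv_app]
    obtain ⟨m, rfl⟩ : ∃ m, n = m + 1 := ⟨n - 1, by omega⟩
    exact (finRotate_of_lt (by simpa using hx)).symm
  have heq : τ₂⁻¹ * τ = finRotate n := by
    have hf : (finRotate n)⁻¹ * (τ₂⁻¹ * τ) = 1 := by
      have hfix : ∀ x : Fin n, x.1 < n - 1 → ((finRotate n)⁻¹ * (τ₂⁻¹ * τ)) x = x := by
        intro x hx
        rw [Equiv.Perm.mul_apply, hlt x hx, inv_app]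
      generalize (finRotate n)⁻¹ * (τ₂⁻¹ * τ) = f at hfix
      ext1 x
      by_cases hx : x.1 < n - 1
      · exact hfix x hx
      · by_contra hne
        have hne : f x ≠ x := hne
        have h8 : (f x).1 < n - 1 := by
          have : (f x).1 ≠ x.1 := fun h => hne (Fin.ext h)
          omega
        exact hne (f.injective (hfix _ h8))
    exact (inv_mul_eq_one.1 hf).symm
  exact heq ▸ hm
end

section
/- Let n ≥ 3 and let H be an abelian subgroup of Sym_n such that (1,2,...,n) ∉ H, with trivial stabilizers of 1 and n. Then the monoid S = S_n(H) satisfies S z ∩ S a_1² = ∅ and a_1² S ∩ z S = ∅, where z = a_1⋯a_n; in particular S does not have a group of (two-sided) fractions. -/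
section Aux

variable {n : ℕ} {α : Type*}

/-- `m` is an admissible shift: some `ρ ∈ H` satisfies `ρ i = i + m` whenever this makes sense. -/
def Sh (H : Subgroup (Equiv.Perm (Fin n))) (m : ℕ) : Prop :=
  1 ≤ m ∧ m < n ∧ ∃ ρ ∈ H, ∀ i j : Fin n, j.val = i.val + m → ρ i = j

def BlockAt (c : Fin n → α) (w : List α) (p : ℕ) (σ : Equiv.Perm (Fin n)) : Prop :=
  ∀ (i : Fin n) (k : ℕ), k = p + i.val → w[k]? = some (c (σ i))

def SuffAt (c : Fin n → α) (w : List α) (q m : ℕ) (σ : Equiv.Perm (Fin n)) : Prop :=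
  ∀ (i : Fin n) (k : ℕ), k + n = q + m + i.val → q ≤ k → w[k]? = some (c (σ i))

inductive Tail (H : Subgroup (Equiv.Perm (Fin n))) (c : Fin n → α) (w : List α) : ℕ → Prop
  | nil (q : ℕ) : q = w.length → Tail H c w q
  | cons (q m : ℕ) (σ : Equiv.Perm (Fin n)) : σ ∈ H → Sh H m → SuffAt c w q m σ →
      Tail H c w (q + m) → Tail H c w q

def EE (H : Subgroup (Equiv.Perm (Fin n))) (c : Fin n → α) (w : List α) : Prop :=
  ∃ p, ∃ σ ∈ H, BlockAt c w p σ ∧ Tail H c w (p + n)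

theorem sh_sub (H : Subgroup (Equiv.Perm (Fin n)))
    (hab : ∀ σ ∈ H, ∀ τ ∈ H, σ * τ = τ * σ)
    (h2 : ∀ σ ∈ H, ∀ i : Fin n, i.val + 1 = n → σ i = i → σ = 1)
    {a b : ℕ} (hb : 1 ≤ b) (ha : Sh H a) (hs : Sh H (a + b))
    (κ : Equiv.Perm (Fin n)) (hκ : κ ∈ H)
    (h : ∀ i j : Fin n, j.val = i.val + b → n ≤ i.val + a + b → κ i = j) : Sh H b := by
  obtain ⟨ha1, han, ρ, hρ, hρs⟩ := ha
  obtain ⟨hs1, hsn, θ, hθ, hθs⟩ := hs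
  refine ⟨hb, by omega, κ, hκ, ?_⟩
  have e1 : ∀ i j : Fin n, j.val = i.val + b → a ≤ i.val → (θ * ρ⁻¹) i = j := by
    intro i j hij hai
    have hx : ρ ⟨i.val - a, by omega⟩ = i := hρs _ _ (by simp only; omega)
    have hy : θ ⟨i.val - a, by omega⟩ = j := hθs _ _ (by simp only; omega)
    rw [Equiv.Perm.mul_apply, ← hy]
    congr 1
    rw [Equiv.Perm.inv_eq_iff_eq, hx]
  have e2 : ∀ i j : Fin n, j.val = i.val + b → i.val + a + b < n → (θ * ρ⁻¹) i = j := by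
    intro i j hij hai
    rw [hab θ hθ ρ⁻¹ (H.inv_mem hρ), Equiv.Perm.mul_apply, Equiv.Perm.inv_eq_iff_eq]
    have hx : ρ j = ⟨i.val + a + b, hai⟩ := hρs _ _ (by simp only; omega)
    rw [hx]
    exact hθs _ _ (by simp only; omega)
  have hlast : κ * (θ * ρ⁻¹)⁻¹ = 1 := by
    apply h2 _ (H.mul_mem hκ (H.inv_mem (H.mul_mem hθ (H.inv_mem hρ)))) ⟨n - 1, by omega⟩
    · simp only; omega
    · have hx := e1 ⟨n - 1 - b, by omega⟩ ⟨n - 1, by omega⟩ (by simp only; omega)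
        (by simp only; omega)
      have hy := h ⟨n - 1 - b, by omega⟩ ⟨n - 1, by omega⟩ (by simp only; omega)
        (by simp only; omega)
      rw [Equiv.Perm.mul_apply]
      conv_lhs => rw [← hx]
      rw [show ∀ (f : Equiv.Perm (Fin n)) x, f⁻¹ (f x) = x from fun f x => f.symm_apply_apply x, hy]
  have hk : κ = θ * ρ⁻¹ := mul_inv_eq_one.mp hlast
  intro i j hij
  by_cases hc : n ≤ i.val + a + b
  · exact h i j hij hc
  · rw [hk]; exact e2 i j hij (by omega)

theorem block_len {c : Fin n → α} {w : List α} {p : ℕ} {σ : Equiv.Perm (Fin n)}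
    (hn : 1 ≤ n) (h : BlockAt c w p σ) : p + n ≤ w.length := by
  have := h ⟨n - 1, by omega⟩ (p + (n - 1)) rfl
  have := (List.getElem?_eq_some_iff.mp this).1
  omega

theorem match_eq {c : Fin n → α} (hc : Function.Injective c) {w : List α}
    {p q m : ℕ} {μ σ : Equiv.Perm (Fin n)}
    (hμ : BlockAt c w p μ) (hσ : SuffAt c w q m σ) (i j : Fin n)
    (hij : p + i.val + n = q + m + j.val) (hq : q ≤ p + i.val) : μ i = σ j := by
  have a := hμ i _ rfl
  have b := hσ j (p + i.val) hij hq
  rw [a] at b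
  exact hc (Option.some.inj b)

theorem block_suff {c : Fin n → α} {w : List α} {p : ℕ} {σ : Equiv.Perm (Fin n)}
    (h : BlockAt c w p σ) : SuffAt c w p n σ := by
  intro i k hk _
  exact h i k (by omega)

theorem walk2 (H : Subgroup (Equiv.Perm (Fin n)))
    (hab : ∀ σ ∈ H, ∀ τ ∈ H, σ * τ = τ * σ)
    (h2 : ∀ σ ∈ H, ∀ i : Fin n, i.val + 1 = n → σ i = i → σ = 1)
    {c : Fin n → α} (hc : Function.Injective c) {w : List α} {p : ℕ} {μ : Equiv.Perm (Fin n)}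
    (hμH : μ ∈ H) (hμ : BlockAt c w p μ) (hn : 1 ≤ n) {q : ℕ} (hq : Tail H c w q) :
    ∀ a, q + a = p + n → Sh H a → Tail H c w (p + n) := by
  induction hq with
  | nil q hq =>
    intro a ha hs
    have := block_len hn hμ
    have := hs.1
    omega
  | cons q m σ hσ hm hsu ht ih =>
    intro a ha hs
    have ha2 := hs.2.1
    rcases lt_trichotomy m a with hlt | heq | hgt
    · obtain ⟨b, rfl⟩ := Nat.exists_eq_add_of_lt hlt
      refine ih (b + 1) (by omega) ?_
      refine sh_sub H hab h2 (a := m) (by omega) hm hs (σ⁻¹ * μ)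
        (H.mul_mem (H.inv_mem hσ) hμH) ?_
      intro i j hij hi
      rw [Equiv.Perm.mul_apply, Equiv.Perm.inv_eq_iff_eq]
      exact match_eq hc hμ hsu i j (by omega) (by omega)
    · subst heq
      rw [← ha]; exact ht
    · obtain ⟨e, rfl⟩ := Nat.exists_eq_add_of_lt hgt
      have he : Sh H (e + 1) := by
        refine sh_sub H hab h2 (a := a) (by omega) hs hm (μ⁻¹ * σ)
          (H.mul_mem (H.inv_mem hμH) hσ) ?_
        intro i j hij hi
        rw [Equiv.Perm.mul_apply, Equiv.Perm.inv_eq_iff_eq]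
        exact (match_eq hc hμ hsu j i (by omega) (by omega)).symm
      refine Tail.cons (p + n) (e + 1) σ hσ he ?_ ?_
      · intro i k hk hk2
        exact hsu i k (by omega) (by omega)
      · have : p + n + (e + 1) = q + (a + e + 1) := by omega
        rw [this]; exact ht

theorem walk1 (H : Subgroup (Equiv.Perm (Fin n)))
    (hab : ∀ σ ∈ H, ∀ τ ∈ H, σ * τ = τ * σ)
    (h2 : ∀ σ ∈ H, ∀ i : Fin n, i.val + 1 = n → σ i = i → σ = 1)
    {c : Fin n → α} (hc : Function.Injective c) {w : List α} {p : ℕ} {μ : Equiv.Perm (Fin n)}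
    (hμH : μ ∈ H) (hμ : BlockAt c w p μ) (hn : 1 ≤ n) {q : ℕ} (hq : Tail H c w q) :
    q ≤ p → Tail H c w (p + n) := by
  induction hq with
  | nil q hq =>
    intro h
    have := block_len hn hμ
    omega
  | cons q m σ hσ hm hsu ht ih =>
    intro h
    by_cases hqm : q + m ≤ p
    · exact ih hqm
    · have hm2 := hm.2.1
      refine walk2 H hab h2 hc hμH hμ hn ht (p + n - (q + m)) (by omega) ?_
      refine ⟨by omega, by omega, σ⁻¹ * μ, H.mul_mem (H.inv_mem hσ) hμH, ?_⟩
      intro i j hij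
      rw [Equiv.Perm.mul_apply, Equiv.Perm.inv_eq_iff_eq]
      exact match_eq hc hμ hsu i j (by omega) (by omega)

theorem tail_congr {H : Subgroup (Equiv.Perm (Fin n))} {c : Fin n → α} {w w' : List α}
    (hl : w.length = w'.length) {q : ℕ} (hq : Tail H c w q) :
    (∀ k, q ≤ k → w[k]? = w'[k]?) → Tail H c w' q := by
  induction hq with
  | nil q hq => intro _; exact Tail.nil q (by omega)
  | cons q m σ hσ hm hsu ht ih =>
    intro h
    refine Tail.cons q m σ hσ hm ?_ (ih fun k hk => h k (by omega))
    intro i k hk hk2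
    rw [← h k hk2]
    exact hsu i k hk hk2

theorem EE_step (H : Subgroup (Equiv.Perm (Fin n)))
    (hab : ∀ σ ∈ H, ∀ τ ∈ H, σ * τ = τ * σ)
    (h2 : ∀ σ ∈ H, ∀ i : Fin n, i.val + 1 = n → σ i = i → σ = 1)
    {c : Fin n → α} (hc : Function.Injective c) {w w' : List α} {p : ℕ}
    {μ μ' : Equiv.Perm (Fin n)} (hn : 1 ≤ n)
    (hμH : μ ∈ H) (hμ : BlockAt c w p μ) (hμH' : μ' ∈ H) (hμ' : BlockAt c w' p μ')
    (hl : w.length = w'.length) (hag : ∀ k, (k < p ∨ p + n ≤ k) → w[k]? = w'[k]?)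
    (hE : EE H c w) : EE H c w' := by
  obtain ⟨r, τ, hτH, hτ, ht⟩ := hE
  by_cases hpr : p + n ≤ r
  · refine ⟨r, τ, hτH, ?_, tail_congr hl ht fun k hk => hag k (by omega)⟩
    intro i k hk
    rw [← hag k (by omega)]
    exact hτ i k hk
  · refine ⟨p, μ', hμH', hμ', tail_congr hl ?_ fun k hk => hag k (by omega)⟩
    rcases lt_trichotomy p r with hlt | heq | hgt
    · refine Tail.cons (p + n) (r - p) τ hτH ?_ ?_ ?_
      · refine ⟨by omega, by omega, μ⁻¹ * τ, H.mul_mem (H.inv_mem hμH) hτH, ?_⟩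
        intro i j hij
        rw [Equiv.Perm.mul_apply, Equiv.Perm.inv_eq_iff_eq]
        exact match_eq hc hτ (block_suff hμ) i j (by omega) (by omega)
      · intro i k hk hk2
        exact hτ i k (by omega)
      · have : p + n + (r - p) = r + n := by omega
        rw [this]; exact ht
    · subst heq; exact ht
    · by_cases hp : r + n ≤ p
      · exact walk1 H hab h2 hc hμH hμ hn ht hp
      · refine walk2 H hab h2 hc hμH hμ hn ht (p - r) (by omega) ?_
        refine ⟨by omega, by omega, τ⁻¹ * μ, H.mul_mem (H.inv_mem hτH) hμH, ?_⟩
        intro i j hij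
        rw [Equiv.Perm.mul_apply, Equiv.Perm.inv_eq_iff_eq]
        exact match_eq hc hμ (block_suff hτ) i j (by omega) (by omega)

theorem suff_ne {c : Fin n → α} (hc : Function.Injective c) {w : List α} {q m : ℕ}
    {σ : Equiv.Perm (Fin n)} (hm : 2 ≤ m) (hmn : m ≤ n) (h : SuffAt c w q m σ)
    (hl : q + m = w.length) : w[w.length - 2]? ≠ w[w.length - 1]? := by
  rw [h ⟨n - 2, by omega⟩ (w.length - 2) (by simp only; omega) (by omega),
    h ⟨n - 1, by omega⟩ (w.length - 1) (by simp only; omega) (by omega)]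
  intro he
  have := σ.injective (hc (Option.some.inj he))
  rw [Fin.mk.injEq] at this
  omega

theorem tail_ne {H : Subgroup (Equiv.Perm (Fin n))} (hrot : ¬ Sh H 1) {c : Fin n → α}
    (hc : Function.Injective c) {w : List α} {q : ℕ} (hq : Tail H c w q) :
    q = w.length ∨ w[w.length - 2]? ≠ w[w.length - 1]? := by
  induction hq with
  | nil q hq => exact Or.inl hq
  | cons q m σ hσ hm hsu ht ih =>
    right
    rcases ih with ih | ih
    · have h1 := hm.1
      have hne : m ≠ 1 := by rintro rfl; exact hrot hm
      exact suff_ne hc (by omega) hm.2.1.le hsu ih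
    · exact ih

theorem EE_ne {H : Subgroup (Equiv.Perm (Fin n))} (hn : 2 ≤ n) (hrot : ¬ Sh H 1) {c : Fin n → α}
    (hc : Function.Injective c) {w : List α} (hE : EE H c w) :
    w[w.length - 2]? ≠ w[w.length - 1]? := by
  obtain ⟨r, τ, hτH, hτ, ht⟩ := hE
  rcases tail_ne hrot hc ht with h | h
  · exact suff_ne hc hn le_rfl (block_suff hτ) h
  · exact h

theorem EE_not_sq {H : Subgroup (Equiv.Perm (Fin n))} (hn : 2 ≤ n) (hrot : ¬ Sh H 1)
    {c : Fin n → α} (hc : Function.Injective c) (u : List α) (a : α) :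
    ¬ EE H c (u ++ [a, a]) := by
  intro h
  have := EE_ne hn hrot hc h
  apply this
  simp

theorem blockAt_append (c : Fin n → α) (x y : List α) (σ : Equiv.Perm (Fin n)) :
    BlockAt c (x ++ List.ofFn (fun i => c (σ i)) ++ y) x.length σ := by
  intro i k hk
  subst hk
  rw [List.append_assoc, List.getElem?_append_right (by omega),
    List.getElem?_append_left (by simp)]
  simp

theorem EE_replace (H : Subgroup (Equiv.Perm (Fin n)))
    (hab : ∀ σ ∈ H, ∀ τ ∈ H, σ * τ = τ * σ)
    (h2 : ∀ σ ∈ H, ∀ i : Fin n, i.val + 1 = n → σ i = i → σ = 1)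
    {c : Fin n → α} (hc : Function.Injective c) (hn : 1 ≤ n) (x y : List α)
    {σ τ : Equiv.Perm (Fin n)} (hσ : σ ∈ H) (hτ : τ ∈ H)
    (hE : EE H c (x ++ List.ofFn (fun i => c (σ i)) ++ y)) :
    EE H c (x ++ List.ofFn (fun i => c (τ i)) ++ y) := by
  refine EE_step H hab h2 hc hn hσ (blockAt_append c x y σ) hτ (blockAt_append c x y τ)
    (by simp) ?_ hE
  rintro k (hk | hk)
  · rw [List.append_assoc, List.append_assoc, List.getElem?_append_left hk,
      List.getElem?_append_left hk]
  · rw [List.getElem?_append_right (by simpa using hk),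
      List.getElem?_append_right (by simpa using hk)]
    simp

theorem EE_end (H : Subgroup (Equiv.Perm (Fin n))) (c : Fin n → α) (x : List α)
    {σ : Equiv.Perm (Fin n)} (hσ : σ ∈ H) :
    EE H c (x ++ List.ofFn (fun i => c (σ i))) := by
  refine ⟨x.length, σ, hσ, ?_, Tail.nil _ (by simp)⟩
  simpa using blockAt_append c x [] σ

theorem con_inv (H : Set (Equiv.Perm (Fin n))) (Q : FreeMonoid (Fin n) → Prop)
    (hQ : ∀ σ ∈ H, ∀ x y, Q (x * permWord 1 * y) ↔ Q (x * permWord σ * y))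
    {u v : FreeMonoid (Fin n)} (h : snPi n H u = snPi n H v) : Q u ↔ Q v := by
  let r : Con (FreeMonoid (Fin n)) :=
    { r := fun a b => ∀ x y, Q (x * a * y) ↔ Q (x * b * y)
      iseqv := ⟨fun a x y => Iff.rfl, fun h x y => (h x y).symm,
        fun h h' x y => (h x y).trans (h' x y)⟩
      mul' := by
        intro a b c d hab hcd x y
        have e1 := hab x (c * y)
        have e2 := hcd (x * b) y
        simp only [mul_assoc] at e1 e2 ⊢
        exact e1.trans e2 }
  have hle : snCon n H ≤ r := by
    apply Con.conGen_le.mpr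
    rintro a b ⟨σ, hσ, rfl, rfl⟩
    exact hQ σ hσ
  have h' : snCon n H u v := (Con.eq _).mp h
  simpa using hle h' 1 1

theorem eq_finRotate (ρ : Equiv.Perm (Fin n))
    (h : ∀ i j : Fin n, j.val = i.val + 1 → ρ i = j) : ρ = finRotate n := by
  rcases n with _ | n
  · ext i; exact i.elim0
  have key : ∀ i : Fin (n + 1), i ≠ Fin.last n → ρ i = finRotate (n + 1) i := by
    intro i hi
    have hi' : i.val < n := Fin.val_lt_last hi
    apply h
    rw [coe_finRotate_of_ne_last hi]
  ext1 i
  by_cases hi : i = Fin.last n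
  · subst hi
    obtain ⟨j, hj⟩ := (finRotate (n + 1)).surjective (ρ (Fin.last n))
    by_cases hjl : j = Fin.last n
    · rw [← hj, hjl]
    · exact absurd (ρ.injective ((key j hjl).trans hj)) hjl
  · exact key i hi

end Aux

theorem stmt11 (n : ℕ) (hn : 3 ≤ n) (H : Subgroup (Equiv.Perm (Fin n)))
    (hab : ∀ σ ∈ H, ∀ τ ∈ H, σ * τ = τ * σ) (hrot : finRotate n ∉ H)
    (h1 : ∀ σ ∈ H, σ ⟨0, by omega⟩ = ⟨0, by omega⟩ → σ = 1)
    (h2 : ∀ σ ∈ H, σ ⟨n - 1, by omega⟩ = ⟨n - 1, by omega⟩ → σ = 1) :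
    (∀ s t : SnMonoid n ↑H,
      s * zElem n ↑H ≠ t * (aGen n ↑H ⟨0, by omega⟩) ^ 2) ∧
    (∀ s t : SnMonoid n ↑H,
      (aGen n ↑H ⟨0, by omega⟩) ^ 2 * s ≠ zElem n ↑H * t) ∧
    ¬ ∃ (G : Type) (_ : Group G) (φ : SnMonoid n ↑H →* G),
        Function.Injective φ ∧
        ∀ g : G, ∃ s t : SnMonoid n ↑H, g = φ s * (φ t)⁻¹ := by
  have right : ∀ s t : SnMonoid n ↑H,
      s * zElem n ↑H ≠ t * (aGen n ↑H ⟨0, by omega⟩) ^ 2 := by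
    intro s t hst
    obtain ⟨s, rfl⟩ : ∃ u, snPi n ↑H u = s := Con.mk'_surjective s
    obtain ⟨t, rfl⟩ : ∃ u, snPi n ↑H u = t := Con.mk'_surjective t
    rw [zElem, aGen, ← map_pow, ← map_mul, ← map_mul] at hst
    have h2' : ∀ σ ∈ H, ∀ i : Fin n, i.val + 1 = n → σ i = i → σ = 1 := by
      intro σ hσ i hi hf
      have : i = ⟨n - 1, by omega⟩ := Fin.ext (by simp only; omega)
      refine h2 σ hσ ?_
      simpa only [this] using hf
    have hr : ¬ Sh H 1 := by
      rintro ⟨_, _, ρ, hρ, hs⟩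
      exact hrot (eq_finRotate ρ hs ▸ hρ)
    have hid : Function.Injective (fun i : Fin n => i) := fun _ _ h => h
    have key := con_inv (H : Set (Equiv.Perm (Fin n)))
      (fun w => EE H (fun i : Fin n => i) (FreeMonoid.toList w)) (by
        intro σ hσ x y
        exact ⟨EE_replace H hab h2' hid (by omega) (FreeMonoid.toList x) (FreeMonoid.toList y)
            H.one_mem hσ,
          EE_replace H hab h2' hid (by omega) (FreeMonoid.toList x) (FreeMonoid.toList y)
            hσ H.one_mem⟩) hst
    refine EE_not_sq (by omega) hr hid (FreeMonoid.toList t) ⟨0, by omega⟩ ?_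
    have := key.mp (EE_end H (fun i : Fin n => i) (FreeMonoid.toList s) H.one_mem)
    simpa [pow_two] using this
  have left : ∀ s t : SnMonoid n ↑H,
      (aGen n ↑H ⟨0, by omega⟩) ^ 2 * s ≠ zElem n ↑H * t := by
    intro s t hst
    obtain ⟨s, rfl⟩ : ∃ u, snPi n ↑H u = s := Con.mk'_surjective s
    obtain ⟨t, rfl⟩ : ∃ u, snPi n ↑H u = t := Con.mk'_surjective t
    rw [zElem, aGen, ← map_pow, ← map_mul, ← map_mul] at hst
    let c : Equiv.Perm (Fin n) := Fin.revPerm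
    have hcc : ∀ i, c (c i) = i := fun i => Fin.rev_rev i
    have hc2 : c * c = 1 := Equiv.ext hcc
    have hcv : ∀ i, (c i).val = n - (i.val + 1) := fun i => Fin.val_rev i
    let K : Subgroup (Equiv.Perm (Fin n)) := H.comap (MulAut.conj c).toMonoidHom
    have hci : c⁻¹ = c := inv_eq_of_mul_eq_one_right hc2
    have hK : ∀ σ, σ ∈ K ↔ c * σ * c ∈ H := by
      intro σ
      simp only [K, Subgroup.mem_comap, MulEquiv.coe_toMonoidHom, MulAut.conj_apply, hci]
    have hK' : ∀ σ ∈ H, c * σ * c ∈ K := by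
      intro σ hσ
      rw [hK]
      have : c * (c * σ * c) * c = σ := by
        ext1 i; simp [Equiv.Perm.mul_apply, hcc]
      rwa [this]
    have habK : ∀ σ ∈ K, ∀ τ ∈ K, σ * τ = τ * σ := by
      intro σ hσ τ hτ
      have := hab _ ((hK σ).mp hσ) _ ((hK τ).mp hτ)
      ext1 i
      have h3 := congrArg (fun f : Equiv.Perm (Fin n) => c (f (c i))) this
      simpa [Equiv.Perm.mul_apply, hcc] using h3
    have h2' : ∀ σ ∈ K, ∀ i : Fin n, i.val + 1 = n → σ i = i → σ = 1 := by
      intro σ hσ i hi hf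
      have h0 : c ⟨0, by omega⟩ = i := Fin.ext (by rw [hcv]; simp only; omega)
      have h0' : c i = ⟨0, by omega⟩ := Fin.ext (by rw [hcv]; simp only; omega)
      have := h1 _ ((hK σ).mp hσ) (by simp only [Equiv.Perm.mul_apply, h0, hf, h0'])
      ext1 j
      have h3 := congrArg (fun f : Equiv.Perm (Fin n) => c (f (c j))) this
      simpa [Equiv.Perm.mul_apply, hcc] using h3
    have hr : ¬ Sh K 1 := by
      rintro ⟨_, _, ρ, hρ, hs⟩
      have hm := H.inv_mem ((hK ρ).mp hρ)
      refine hrot (eq_finRotate _ ?_ ▸ hm)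
      intro i j hij
      rw [Equiv.Perm.inv_eq_iff_eq]
      simp only [Equiv.Perm.mul_apply]
      rw [hs (c j) (c i) (by rw [hcv, hcv]; omega), hcc]
    have hrev : ∀ σ : Equiv.Perm (Fin n), (FreeMonoid.toList (permWord σ)).reverse =
        List.ofFn (fun i => c ((c * σ * c) i)) := by
      intro σ
      apply List.ext_getElem
      · simp [permWord]
      · intro i hi hi'
        simp only [permWord, FreeMonoid.toList_ofList, List.getElem_reverse, List.getElem_ofFn,
          Equiv.Perm.mul_apply, hcc, List.length_ofFn]
        congr 1
        apply Fin.ext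
        rw [hcv]
        simp only
        omega
    have key := con_inv (H : Set (Equiv.Perm (Fin n)))
      (fun w => EE K c (FreeMonoid.toList w).reverse) (by
        intro σ hσ x y
        simp only [FreeMonoid.toList_mul, List.reverse_append, hrev, ← List.append_assoc]
        exact ⟨EE_replace K habK h2' c.injective (by omega) _ _ (hK' _ H.one_mem) (hK' _ hσ),
          EE_replace K habK h2' c.injective (by omega) _ _ (hK' _ hσ) (hK' _ H.one_mem)⟩) hst
    refine EE_not_sq (by omega) hr c.injective (FreeMonoid.toList s).reverse ⟨0, by omega⟩ ?_
    have e := EE_end K c (FreeMonoid.toList t).reverse (hK' _ H.one_mem)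
    rw [← hrev] at e
    have := key.mpr (by simpa using e)
    simpa [pow_two] using this
  refine ⟨right, left, ?_⟩
  rintro ⟨G, _, φ, hφ, hfr⟩
  obtain ⟨s, t, hst⟩ := hfr ((φ (zElem n ↑H))⁻¹ * φ ((aGen n ↑H ⟨0, by omega⟩) ^ 2))
  apply left t s
  apply hφ
  rw [map_mul, map_mul]
  rw [eq_mul_inv_iff_mul_eq, mul_assoc, inv_mul_eq_iff_eq_mul] at hst
  exact hst
end

section
/- Let n ≥ 3, let H be either a non-transitive subgroup of Sym_n or an abelian subgroup of Sym_n with (1,2,...,n) ∉ H, and let S = S_n(H). For every m ≥ 3 and every i ∈ {1,...,n}, the ideal S a_i^m S is a prime ideal of S. -/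
namespace SnAux

variable {α : Type*}

/-- The word `g(b 0) ⋯ g(b (r-1))`. -/
def B (b : ℕ → α) (r : ℕ) (g : Equiv.Perm α) : List α := (List.range r).map fun k => g (b k)

lemma B_succ (b : ℕ → α) (r : ℕ) (g : Equiv.Perm α) : B b (r+1) g = B b r g ++ [g (b r)] := by
  simp [B, List.range_succ]

lemma B_length (b : ℕ → α) (r : ℕ) (g : Equiv.Perm α) : (B b r g).length = r := by simp [B]

/-- One rewriting step. -/
def Step (H : Subgroup (Equiv.Perm α)) (b : ℕ → α) (n : ℕ) (x y : List α) : Prop :=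
  ∃ p q, ∃ g ∈ H, ∃ h ∈ H, x = p ++ B b n g ++ q ∧ y = p ++ B b n h ++ q

/-- The congruence on words. -/
abbrev E (H : Subgroup (Equiv.Perm α)) (b : ℕ → α) (n : ℕ) := Relation.ReflTransGen (Step H b n)

variable {H : Subgroup (Equiv.Perm α)} {b : ℕ → α} {n : ℕ}

lemma Step.symm {x y : List α} (h : Step H b n x y) : Step H b n y x := by
  obtain ⟨p, q, g, hg, k, hk, h1, h2⟩ := h
  exact ⟨p, q, k, hk, g, hg, h2, h1⟩

lemma E.symm {x y : List α} (h : E H b n x y) : E H b n y x := by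
  induction h with
  | refl => exact .refl
  | tail _ h2 ih => exact (Relation.ReflTransGen.single h2.symm).trans ih

lemma Step.len {x y : List α} (h : Step H b n x y) : x.length = y.length := by
  obtain ⟨p, q, g, hg, k, hk, rfl, rfl⟩ := h
  simp [B_length]

lemma E.len {x y : List α} (h : E H b n x y) : x.length = y.length := by
  induction h with
  | refl => rfl
  | tail _ h2 ih => exact ih.trans h2.len

lemma E.ctx {x y : List α} (h : E H b n x y) (p q : List α) :
    E H b n (p ++ x ++ q) (p ++ y ++ q) := by
  induction h with
  | refl => exact .refl
  | tail _ h2 ih =>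
    refine ih.tail ?_
    obtain ⟨p', q', g, hg, k, hk, rfl, rfl⟩ := h2
    exact ⟨p ++ p', q' ++ q, g, hg, k, hk, by simp, by simp⟩

lemma E.right {x y : List α} (h : E H b n x y) (q : List α) :
    E H b n (x ++ q) (y ++ q) := by simpa using h.ctx [] q

lemma E.mul {x y x' y' : List α} (h : E H b n x y) (h' : E H b n x' y') :
    E H b n (x ++ x') (y ++ y') := by
  refine (h.right x').trans ?_
  simpa using h'.ctx y []

lemma E.swap (p : List α) {g k : Equiv.Perm α} (hg : g ∈ H) (hk : k ∈ H) :
    E H b n (p ++ B b n g) (p ++ B b n k) :=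
  .single ⟨p, [], g, hg, k, hk, by simp, by simp⟩

/-- Structure of equivalences with respect to the last letter. -/
def T (H : Subgroup (Equiv.Perm α)) (b : ℕ → α) (n : ℕ) (Y : List α) (a : α) (Y' : List α)
    (a' : α) : Prop :=
  (a = a' ∧ E H b (n+1) Y Y') ∨ ∃ V, ∃ g ∈ H, ∃ g' ∈ H,
    E H b (n+1) Y (V ++ B b n g) ∧ g (b n) = a ∧
    E H b (n+1) Y' (V ++ B b n g') ∧ g' (b n) = a'

lemma cancelB (N : ℕ)
    (hc : ∀ Y Y' a, Y.length < N → E H b (n+1) (Y ++ [a]) (Y' ++ [a]) → E H b (n+1) Y Y')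
    (t : List α) : ∀ (V V' : List α), (V ++ t).length ≤ N →
    E H b (n+1) (V ++ t) (V' ++ t) → E H b (n+1) V V' := by
  induction t using List.reverseRecOn with
  | nil => intro V V' _ h; simpa using h
  | append_singleton t a ih =>
    intro V V' hl h
    refine ih V V' (by simp at hl ⊢; omega) (hc _ _ a (by simp at hl ⊢; omega) ?_)
    simpa using h

lemma step_T {Y Y' : List α} {a a' : α} (h : Step H b (n+1) (Y ++ [a]) (Y' ++ [a'])) :
    (a = a' ∧ E H b (n+1) Y Y') ∨ ∃ V, ∃ g ∈ H, ∃ g' ∈ H,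
      Y = V ++ B b n g ∧ g (b n) = a ∧ Y' = V ++ B b n g' ∧ g' (b n) = a' := by
  obtain ⟨p, q, g, hg, k, hk, h1, h2⟩ := h
  rcases List.eq_nil_or_concat q with rfl | ⟨q, c, rfl⟩
  · right
    simp only [B_succ, List.append_nil, ← List.append_assoc] at h1 h2
    rw [List.append_singleton_inj] at h1 h2
    exact ⟨p, g, hg, k, hk, h1.1, h1.2.symm, h2.1, h2.2.symm⟩
  · left
    simp only [List.concat_eq_append, ← List.append_assoc] at h1 h2
    rw [List.append_singleton_inj] at h1 h2
    refine ⟨h1.2.trans h2.2.symm, .single ⟨p, q, g, hg, k, hk, ?_, ?_⟩⟩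
    · rw [h1.1]
    · rw [h2.1]

lemma T_main (hreg : ∀ g ∈ H, ∀ h ∈ H, ∀ a, g a = h a → g = h) :
    ∀ N, ∀ (Y Y' : List α) (a a' : α), Y.length = N → E H b (n+1) (Y ++ [a]) (Y' ++ [a']) →
      T H b n Y a Y' a' := by
  intro N
  induction N using Nat.strong_induction_on with
  | _ N ih =>
  have hc : ∀ Y Y' a, Y.length < N → E H b (n+1) (Y ++ [a]) (Y' ++ [a]) → E H b (n+1) Y Y' := by
    intro Y Y' a hl h
    rcases ih _ hl Y Y' a a rfl h with h | ⟨V, g, hg, g', hg', h1, h2, h3, h4⟩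
    · exact h.2
    · obtain rfl := hreg g hg g' hg' _ (h2.trans h4.symm)
      exact h1.trans h3.symm
  intro Y Y' a a' hl h
  generalize hX' : Y' ++ [a'] = X' at h
  induction h generalizing Y' a' with
  | refl =>
    rw [List.append_singleton_inj] at hX'
    left
    exact ⟨hX'.2.symm, by rw [hX'.1]⟩
  | @tail Z X' h1 h2 ihh =>
    subst hX'
    rcases List.eq_nil_or_concat Z with rfl | ⟨Z, c, rfl⟩
    · have := E.len h1
      simp at this
    rw [List.concat_eq_append] at h1 h2
    have hlZ : Z.length = N := by
      have := E.len h1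
      simp at this
      omega
    have hT := ihh Z c (by simp)
    rcases step_T h2 with ⟨rfl, h3⟩ | ⟨p, g1, hg1, g2, hg2, rfl, h4, rfl, h5⟩
    · rcases hT with ⟨rfl, h4⟩ | ⟨V, g, hg, g', hg', h4, h5, h6, h7⟩
      · exact .inl ⟨rfl, h4.trans h3⟩
      · exact .inr ⟨V, g, hg, g', hg', h4, h5, h3.symm.trans h6, h7⟩
    · rcases hT with ⟨rfl, h6⟩ | ⟨V, g, hg, g', hg', h6, h7, h8, h9⟩
      · exact .inr ⟨p, g1, hg1, g2, hg2, h6, h4, .refl, h5⟩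
      · obtain rfl := hreg g' hg' g1 hg1 _ (h9.trans h4.symm)
        have hpV := cancelB N hc _ _ _ hlZ.le h8
        exact .inr ⟨V, g, hg, g2, hg2, h6, h7, hpV.right _, h5⟩

lemma cancel (hreg : ∀ g ∈ H, ∀ h ∈ H, ∀ a, g a = h a → g = h)
    {Y Y' : List α} {a : α} (h : E H b (n+1) (Y ++ [a]) (Y' ++ [a])) : E H b (n+1) Y Y' := by
  rcases T_main hreg _ Y Y' a a rfl h with h | ⟨V, g, hg, g', hg', h1, h2, h3, h4⟩
  · exact h.2
  · obtain rfl := hreg g hg g' hg' _ (h2.trans h4.symm)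
    exact h1.trans h3.symm

lemma claimA (hreg : ∀ g ∈ H, ∀ h ∈ H, ∀ a, g a = h a → g = h)
    (htr : ∀ i j, ∃ σ ∈ H, σ i = j) (hab : ∀ σ ∈ H, ∀ τ ∈ H, σ * τ = τ * σ)
    {m : ℕ} (hrot : ¬ ∃ h ∈ H, ∀ k < m+1, h (b (k+1)) = b k) :
    ∀ N, ∀ X : List α, X.length = N → ∀ V V2, ∀ g ∈ H, ∀ g2 ∈ H,
      E H b (m+1+1) X (V ++ B b (m+1+1) g) → E H b (m+1+1) X (V2 ++ B b (m+1) g2) → False := by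
  intro N
  induction N using Nat.strong_induction_on with
  | _ N ih =>
  intro X hX V V2 g0 hg0 g2 hg2 h1 h2
  obtain ⟨g, hg, hgg⟩ := htr (b (m+1)) (g2 (b m))
  have h3 : E H b (m+1+1) (V ++ B b (m+1+1) g) (V2 ++ B b (m+1) g2) :=
    (E.swap V hg hg0).trans (h1.symm.trans h2)
  have hlen : V.length + (m+1+1) = N := by
    have := h1.len
    simp [B_length] at this
    omega
  have key : ∀ j s, s + j = m+1 → E H b (m+1+1) (V ++ B b (s+1) g) (V2 ++ B b s g2) ∧
      ∀ k, s ≤ k → k < m+1 → g (b (k+1)) = g2 (b k) := by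
    intro j
    induction j with
    | zero =>
      intro s hs
      obtain rfl : s = m+1 := by omega
      exact ⟨h3, fun k _ _ => by omega⟩
    | succ j ihj =>
      intro s hs
      obtain ⟨h4, h5⟩ := ihj (s+1) (by omega)
      rw [B_succ b (s+1), B_succ b s g2, ← List.append_assoc, ← List.append_assoc] at h4
      by_cases heq : g (b (s+1)) = g2 (b s)
      · rw [heq] at h4
        refine ⟨cancel hreg h4, fun k hk hk' => ?_⟩
        rcases hk.eq_or_lt with rfl | hk
        · exact heq
        · exact h5 k hk hk'
      · exfalso
        rcases T_main hreg _ _ _ _ _ rfl h4 with h | ⟨V3, g3, hg3, g4, hg4, h6, h7, h8, h9⟩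
        · exact heq h.1
        have h6' := h6
        rw [B_succ b s, B_succ b m, ← List.append_assoc, ← List.append_assoc] at h6'
        rcases T_main hreg _ _ _ _ _ rfl h6' with h | ⟨V4, g5, hg5, g6, hg6, h10, h11, h12, h13⟩
        · apply heq
          have hkb : (g⁻¹ * g3) (b (m+1)) = b (s+1) := by
            simp [Equiv.Perm.mul_apply, h7]
          have hkb' : (g⁻¹ * g3) (b m) = b s := by
            simp [Equiv.Perm.mul_apply, ← h.1]
          have hhb : (g2⁻¹ * g) (b (m+1)) = b m := by
            simp [Equiv.Perm.mul_apply, hgg]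
          have hcomm := hab (g⁻¹ * g3) (H.mul_mem (H.inv_mem hg) hg3) (g2⁻¹ * g)
            (H.mul_mem (H.inv_mem hg2) hg)
          have h14 := congrArg (fun e : Equiv.Perm α => e (b (m+1))) hcomm
          simp only [Equiv.Perm.mul_apply (g⁻¹ * g3), Equiv.Perm.mul_apply (g2⁻¹ * g)] at h14
          rw [hhb, hkb', hkb, Equiv.Perm.mul_apply] at h14
          rw [h14]
          simp
        · refine ih (V ++ B b (s+1) g).length ?_ _ rfl V4 V3 g5 hg5 g3 hg3 ?_ h6
          · simp [B_length]; omega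
          · rw [B_succ b s, B_succ b (m+1) g5, ← List.append_assoc, ← List.append_assoc, h11]
            exact h10.right _
  apply hrot
  refine ⟨g2⁻¹ * g, H.mul_mem (H.inv_mem hg2) hg, fun k hk => ?_⟩
  have := (key (m+1) 0 (by omega)).2 k (by omega) hk
  simp [Equiv.Perm.mul_apply, this]

lemma right_lemma [Nonempty α] (hreg : ∀ g ∈ H, ∀ h ∈ H, ∀ a, g a = h a → g = h)
    (htr : ∀ i j, ∃ σ ∈ H, σ i = j) (hab : ∀ σ ∈ H, ∀ τ ∈ H, σ * τ = τ * σ)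
    {m : ℕ} (hrot : ¬ ∃ h ∈ H, ∀ k < m+1, h (b (k+1)) = b k) (u : List α) :
    ∃ j, ∀ x, x ≠ j → ∀ u', E H b (m+1+1) u u' → ∀ p, ∀ g ∈ H,
      u' ++ [x] ≠ p ++ B b (m+1+1) g := by
  by_cases hex : ∃ x u', E H b (m+1+1) u u' ∧ ∃ p, ∃ g ∈ H, u' ++ [x] = p ++ B b (m+1+1) g
  · obtain ⟨j, u0, hu0, p0, g0, hg0, h0⟩ := hex
    refine ⟨j, fun x hx u' hu' p g hg h => ?_⟩
    rw [B_succ, ← List.append_assoc, List.append_singleton_inj] at h h0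
    obtain ⟨rfl, h2⟩ := h
    obtain ⟨rfl, h3⟩ := h0
    have he := hu'.symm.trans hu0
    have he' := he
    rw [B_succ, B_succ, ← List.append_assoc, ← List.append_assoc] at he'
    rcases T_main hreg _ _ _ _ _ rfl he' with h | ⟨V, g1, hg1, g2, hg2, h4, h5, h6, h7⟩
    · obtain rfl := hreg g hg g0 hg0 _ h.1
      exact hx (h2.trans h3.symm)
    · refine claimA hreg htr hab hrot _ (p ++ B b (m+1) g) rfl V p g1 hg1 g hg ?_ .refl
      rw [B_succ b m, B_succ b (m+1) g1, ← List.append_assoc, ← List.append_assoc, h5]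
      exact h4.right _
  · push Not at hex
    exact ⟨Classical.arbitrary α, fun x _ u' hu' p g hg => hex x u' hu' p g hg⟩

lemma B_reverse (b : ℕ → α) (n : ℕ) (g : Equiv.Perm α) :
    (B b n g).reverse = B (fun k => b (n - 1 - k)) n g := by
  apply List.ext_getElem
  · simp [B]
  · intro i h1 h2
    simp [B]

lemma E_reverse {x y : List α} (h : E H b n x y) :
    E H (fun k => b (n - 1 - k)) n x.reverse y.reverse := by
  induction h with
  | refl => exact .refl
  | tail _ h2 ih =>
    refine ih.tail ?_
    obtain ⟨p, q, g, hg, k, hk, rfl, rfl⟩ := h2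
    exact ⟨q.reverse, p.reverse, g, hg, k, hk, by simp [B_reverse], by simp [B_reverse]⟩

lemma left_lemma [Nonempty α] (hreg : ∀ g ∈ H, ∀ h ∈ H, ∀ a, g a = h a → g = h)
    (htr : ∀ i j, ∃ σ ∈ H, σ i = j) (hab : ∀ σ ∈ H, ∀ τ ∈ H, σ * τ = τ * σ)
    {m : ℕ} (hrot : ¬ ∃ h ∈ H, ∀ k < m+1, h (b (k+1)) = b k) (v : List α) :
    ∃ j, ∀ x, x ≠ j → ∀ v', E H b (m+1+1) v v' → ∀ q, ∀ g ∈ H,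
      x :: v' ≠ B b (m+1+1) g ++ q := by
  obtain ⟨j, hj⟩ := right_lemma (b := fun k => b (m+1+1 - 1 - k)) hreg htr hab (m := m) (by
    rintro ⟨h, hh, hk⟩
    refine hrot ⟨h⁻¹, H.inv_mem hh, fun k hkm => ?_⟩
    have := hk (m - k) (by omega)
    rw [Equiv.Perm.inv_eq_iff_eq]
    convert this.symm using 2
    · congr 1; omega
    · congr 1; omega) v.reverse
  refine ⟨j, fun x hx v' hv' q g hg h => ?_⟩
  refine hj x hx v'.reverse (E_reverse hv') q.reverse g hg ?_
  have := congrArg List.reverse h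
  simpa [B_reverse] using this

lemma frame (hn : 3 ≤ n) (hnd : ∀ g ∈ H, (B b n g).Nodup) {u v : List α} {x y : α}
    (hx : ∀ u', E H b n u u' → ∀ p, ∀ g ∈ H, u' ++ [x] ≠ p ++ B b n g)
    (hy : ∀ v', E H b n v v' → ∀ q, ∀ g ∈ H, y :: v' ≠ B b n g ++ q) {z : List α}
    (hz : E H b n (u ++ (x :: x :: y :: y :: v)) z) :
    ∃ u' v', E H b n u u' ∧ E H b n v v' ∧ z = u' ++ (x :: x :: y :: y :: v') := by
  induction hz with
  | refl => exact ⟨u, v, .refl, .refl, rfl⟩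
  | tail _ hs ih =>
    obtain ⟨u', v', hu, hv, rfl⟩ := ih
    obtain ⟨p, q, g, hg, k, hk, h1, rfl⟩ := hs
    have hlw := B_length b n g
    have hndg := hnd g hg
    have hx' := hx u' hu
    have hy' := hy v' hv
    rw [List.append_assoc, List.append_eq_append_iff] at h1
    rcases h1 with ⟨a, rfl, h1⟩ | ⟨c, rfl, h1⟩
    · rcases a with _ | ⟨a1, _ | ⟨a2, _ | ⟨a3, _ | ⟨a4, a⟩⟩⟩⟩
      · exfalso
        rcases hw : B b n g with _ | ⟨w1, _ | ⟨w2, w⟩⟩ <;> rw [hw] at hlw hndg h1 <;>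
          simp at hlw hndg h1 <;> grind
      · exfalso
        rcases hw : B b n g with _ | ⟨w1, _ | ⟨w2, _ | ⟨w3, w⟩⟩⟩ <;> rw [hw] at hlw hndg h1 <;>
          simp at hlw hndg h1 <;> grind
      · exfalso
        rcases hw : B b n g with _ | ⟨w1, _ | ⟨w2, w⟩⟩ <;> rw [hw] at hlw hndg h1 <;>
          simp at hlw hndg h1 <;> grind
      · exfalso
        simp at h1
        exact hy' q g hg h1.2.2.2
      · simp at h1
        obtain ⟨rfl, rfl, rfl, rfl, rfl⟩ := h1
        refine ⟨u', a ++ (B b n k ++ q), hu, hv.tail ⟨a, q, g, hg, k, hk, by simp, by simp⟩, by simp⟩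
    · rw [List.append_eq_append_iff] at h1
      rcases h1 with ⟨d, rfl, rfl⟩ | ⟨d, hd, h1⟩
      · refine ⟨p ++ B b n k ++ d, v', hu.tail ⟨p, d, g, hg, k, hk, by simp, by simp⟩, hv, by simp⟩
      · rcases d with _ | ⟨d1, _ | ⟨d2, d⟩⟩
        · simp at hd h1
          subst hd h1
          exact ⟨p ++ B b n k, v', hu.tail ⟨p, [], g, hg, k, hk, by simp, by simp⟩, hv, by simp⟩
        · exfalso
          simp at h1
          apply hx' p g hg
          rw [hd, h1.1]
          simp
        · exfalso
          simp at h1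
          rw [hd] at hndg
          obtain ⟨rfl, rfl, -⟩ := h1
          have := hndg.of_append_right
          simp at this

lemma infix_split {i x : α} (hx : x ≠ i) {m : ℕ} {u v : List α}
    (h : List.replicate m i <:+: u ++ x :: v) :
    List.replicate m i <:+: u ∨ List.replicate m i <:+: v := by
  obtain ⟨p, q, h⟩ := h
  rw [List.append_assoc, List.append_eq_append_iff] at h
  rcases h with ⟨a, rfl, h⟩ | ⟨c, rfl, h⟩
  · rw [List.append_eq_append_iff] at h
    rcases h with ⟨d, rfl, h⟩ | ⟨d, h, h'⟩
    · exact .inl ⟨p, d, by simp⟩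
    · rcases d with _ | ⟨d1, d⟩
      · simp at h
        exact .inl ⟨p, [], by simp [h]⟩
      · simp at h'
        have : d1 ∈ List.replicate m i := by rw [h]; simp
        have := List.eq_of_mem_replicate this
        exact absurd (h'.1.trans this) hx
  · rcases c with _ | ⟨c1, c⟩
    · rcases m with _ | m
      · simp
      · simp [List.replicate_succ] at h
        exact absurd h.1 hx
    · simp at h
      exact .inr ⟨c, q, by simp [h.2]⟩

lemma frame_infix (hn : 3 ≤ n) (hnd : ∀ g ∈ H, (B b n g).Nodup) {u v : List α} {x y : α}
    (hx : ∀ u', E H b n u u' → ∀ p, ∀ g ∈ H, u' ++ [x] ≠ p ++ B b n g)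
    (hy : ∀ v', E H b n v v' → ∀ q, ∀ g ∈ H, y :: v' ≠ B b n g ++ q)
    {i : α} {m : ℕ} (hm : m ≠ 0) (hxi : x ≠ i) (hyi : y ≠ i)
    (hu : ∀ z, E H b n u z → ¬ List.replicate m i <:+: z)
    (hv : ∀ z, E H b n v z → ¬ List.replicate m i <:+: z) :
    ∀ z, E H b n (u ++ ([x, x, y, y] ++ v)) z → ¬ List.replicate m i <:+: z := by
  intro z hz hi
  obtain ⟨u', v', hu', hv', rfl⟩ := frame hn hnd hx hy hz
  have hnil : ¬ List.replicate m i <:+: [] := by simpa using hm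
  rcases infix_split hxi hi with h | h
  · exact hu u' hu' h
  rcases infix_split (u := []) hxi h with h | h
  · exact hnil h
  rcases infix_split (u := []) hyi h with h | h
  · exact hnil h
  rcases infix_split (u := []) hyi h with h | h
  · exact hnil h
  · exact hv v' hv' h

lemma fixed_infix {i k : α} (hki : k ≠ i) (hfix : ∀ g ∈ H, g i = i) {m : ℕ} {u v : List α}
    (hu : ¬ List.replicate m i <:+: u) (hv : ¬ List.replicate m i <:+: v) :
    ∀ z, E H b n (u ++ ([k] ++ v)) z → ¬ List.replicate m i <:+: z := by
  classical
  intro z hz hi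
  have hmap : ∀ x y, E H b n x y → x.map (fun a => decide (a = i)) = y.map (fun a => decide (a = i)) := by
    intro x y h
    induction h with
    | refl => rfl
    | tail _ hs ih =>
      rw [ih]
      obtain ⟨p, q, g, hg, h, hh, rfl, rfl⟩ := hs
      have : ∀ g ∈ H, (B b n g).map (fun a => decide (a = i)) =
          (List.range n).map (fun a => decide (b a = i)) := by
        intro g hg
        simp only [B, List.map_map]
        congr 1
        funext a
        have := hfix g hg
        simp only [Function.comp, decide_eq_decide]
        constructor
        · intro h; apply g.injective; rw [h, this]
        · rintro rfl; exact this
      simp only [List.map_append, this g hg, this h hh]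
  have hback : ∀ w : List α, List.replicate m true <:+: w.map (fun a => decide (a = i)) →
      List.replicate m i <:+: w := by
    intro w hw
    rw [List.infix_map_iff] at hw
    obtain ⟨l, hl, h⟩ := hw
    have : l = List.replicate m i := by
      rw [List.eq_replicate_iff]
      refine ⟨by simpa using (congrArg List.length h).symm, fun a ha => ?_⟩
      have : decide (a = i) ∈ List.replicate m true := by
        rw [h]; exact List.mem_map_of_mem ha
      simpa using List.eq_of_mem_replicate this
    rwa [this] at hl
  have h1 : List.replicate m true <:+: z.map (fun a => decide (a = i)) := by
    have := List.IsInfix.map (fun a => decide (a = i)) hi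
    simpa using this
  rw [← hmap _ _ hz] at h1
  simp only [List.map_append, List.singleton_append, List.map_cons, decide_eq_false hki] at h1
  rcases infix_split (by simp) h1 with h | h
  · exact hu (hback u h)
  · exact hv (hback v h)

/-- The standard enumeration of `Fin n`. -/
def bb (n : ℕ) [NeZero n] (k : ℕ) : Fin n := Fin.ofNat n k

lemma permWord_eq (n : ℕ) [NeZero n] (σ : Equiv.Perm (Fin n)) :
    permWord σ = FreeMonoid.ofList (B (bb n) n σ) := by
  unfold permWord
  congr 1
  apply List.ext_getElem
  · simp [B]
  · intro i h1 h2
    simp at h1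
    simp only [B, bb, List.getElem_ofFn, List.getElem_map, List.getElem_range]
    congr 1
    apply Fin.ext
    simp [Nat.mod_eq_of_lt h1]

/-- The word congruence, bundled. -/
def ECon (n : ℕ) [NeZero n] (H : Subgroup (Equiv.Perm (Fin n))) : Con (FreeMonoid (Fin n)) where
  r x y := E H (bb n) n x.toList y.toList
  iseqv := ⟨fun _ => .refl, fun h => E.symm h, fun h h' => h.trans h'⟩
  mul' h h' := by
    simp only [FreeMonoid.toList_mul]
    exact E.mul h h'

lemma snPi_eq_iff (n : ℕ) [NeZero n] (H : Subgroup (Equiv.Perm (Fin n))) (x y : List (Fin n)) :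
    snPi n ↑H (FreeMonoid.ofList x) = snPi n ↑H (FreeMonoid.ofList y) ↔ E H (bb n) n x y := by
  constructor
  · intro h
    have h1 : snCon n ↑H (FreeMonoid.ofList x) (FreeMonoid.ofList y) := (Con.eq _).1 h
    have hle : snCon n ↑H ≤ ECon n H := by
      unfold snCon
      rw [Con.conGen_le]
      rintro a c ⟨σ, hσ, rfl, rfl⟩
      change E H (bb n) n _ _
      rw [permWord_eq, permWord_eq]
      simpa using E.swap [] H.one_mem hσ
    exact hle h1
  · intro h
    have hz : ∀ σ ∈ H, snPi n ↑H (FreeMonoid.ofList (B (bb n) n σ)) = zElem n ↑H := by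
      intro σ hσ
      rw [← permWord_eq]
      symm
      exact (Con.eq _).2 (ConGen.Rel.of _ _ ⟨σ, hσ, rfl, rfl⟩)
    induction h with
    | refl => rfl
    | tail _ hs ih =>
      rw [ih]
      obtain ⟨p, q, g, hg, k, hk, rfl, rfl⟩ := hs
      simp only [FreeMonoid.ofList_append, map_mul, hz g hg, hz k hk]

lemma mem_iff (n : ℕ) [NeZero n] (H : Subgroup (Equiv.Perm (Fin n))) (m : ℕ) (i : Fin n)
    (x : List (Fin n)) :
    (∃ s t : SnMonoid n ↑H, snPi n ↑H (FreeMonoid.ofList x) = s * (aGen n ↑H i) ^ m * t) ↔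
      ∃ z, E H (bb n) n x z ∧ List.replicate m i <:+: z := by
  have hrep : snPi n ↑H (FreeMonoid.ofList (List.replicate m i)) = (aGen n ↑H i) ^ m := by
    induction m with
    | zero => simp
    | succ m ih =>
      rw [List.replicate_succ', FreeMonoid.ofList_append, map_mul, ih, pow_succ]
      rfl
  have hsurj : ∀ s : SnMonoid n ↑H, ∃ p, snPi n ↑H (FreeMonoid.ofList p) = s := by
    intro s
    obtain ⟨p, hp⟩ := Con.mk'_surjective (c := snCon n ↑H) s
    exact ⟨p.toList, hp⟩
  constructor
  · rintro ⟨s, t, h⟩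
    obtain ⟨p, rfl⟩ := hsurj s
    obtain ⟨q, rfl⟩ := hsurj t
    rw [← hrep, ← map_mul, ← map_mul, ← FreeMonoid.ofList_append, ← FreeMonoid.ofList_append,
      snPi_eq_iff] at h
    exact ⟨_, h, p, q, rfl⟩
  · rintro ⟨z, h, p, q, rfl⟩
    rw [← snPi_eq_iff, FreeMonoid.ofList_append, FreeMonoid.ofList_append, map_mul, map_mul,
      hrep] at h
    exact ⟨_, _, h⟩

lemma bb_inj {n : ℕ} [NeZero n] {k l : ℕ} (hk : k < n) (hl : l < n) (h : bb n k = bb n l) :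
    k = l := by
  have := congrArg Fin.val h
  simpa [bb, Nat.mod_eq_of_lt hk, Nat.mod_eq_of_lt hl] using this

lemma B_nodup {n : ℕ} [NeZero n] (g : Equiv.Perm (Fin n)) : (B (bb n) n g).Nodup := by
  unfold B
  refine List.Nodup.map_on ?_ List.nodup_range
  intro k hk l hl h
  exact bb_inj (by simpa using hk) (by simpa using hl) (g.injective h)

lemma exists_not_orbit {H : Subgroup (Equiv.Perm α)} (hH : ¬ ∀ i j : α, ∃ σ ∈ H, σ i = j)
    {i : α} (hi : ¬ ∀ g ∈ H, g i = i) (l : α) : ∃ x, x ≠ i ∧ ∀ g ∈ H, g l ≠ x := by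
  by_contra! hcon
  apply hi
  intro g hg
  by_contra hgi
  obtain ⟨h, hh, h1⟩ := hcon _ hgi
  have hall : ∀ x, ∃ g ∈ H, g l = x := by
    intro x
    by_cases hx : x = i
    · refine ⟨g⁻¹ * h, H.mul_mem (H.inv_mem hg) hh, ?_⟩
      simp [Equiv.Perm.mul_apply, h1, hx]
    · exact hcon x hx
  apply hH
  intro a c
  obtain ⟨g1, hg1, rfl⟩ := hall a
  obtain ⟨g2, hg2, rfl⟩ := hall c
  exact ⟨g2 * g1⁻¹, H.mul_mem hg2 (H.inv_mem hg1), by simp [Equiv.Perm.mul_apply]⟩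

lemma exists_ne_ne {n : ℕ} (hn : 3 ≤ n) (i j : Fin n) : ∃ x : Fin n, x ≠ i ∧ x ≠ j := by
  have : ∃ x, x ∉ ({i, j} : Finset (Fin n)) := by
    by_contra! h
    have h1 : Finset.univ ⊆ ({i, j} : Finset (Fin n)) := fun x _ => h x
    have h2 := Finset.card_le_card h1
    have h3 := Finset.card_le_two (a := i) (b := j)
    simp at h2
    omega
  simpa using this

lemma core (n : ℕ) [NeZero n] (hn : 3 ≤ n) (H : Subgroup (Equiv.Perm (Fin n)))
    (hH : (¬ ∀ i j : Fin n, ∃ σ ∈ H, σ i = j) ∨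
      ((∀ σ ∈ H, ∀ τ ∈ H, σ * τ = τ * σ) ∧ finRotate n ∉ H))
    (m : ℕ) (hm : m ≠ 0) (i : Fin n) (u v : List (Fin n))
    (hu : ∀ z, E H (bb n) n u z → ¬ List.replicate m i <:+: z)
    (hv : ∀ z, E H (bb n) n v z → ¬ List.replicate m i <:+: z) :
    ∃ s, ∀ z, E H (bb n) n (u ++ (s ++ v)) z → ¬ List.replicate m i <:+: z := by
  obtain ⟨k, rfl⟩ : ∃ k, n = k+1+1 := ⟨n - 2, by omega⟩
  by_cases htr : ∀ i j : Fin (k+1+1), ∃ σ ∈ H, σ i = j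
  · obtain ⟨hab, hrot⟩ : (∀ σ ∈ H, ∀ τ ∈ H, σ * τ = τ * σ) ∧ finRotate (k+1+1) ∉ H := by tauto
    have hreg : ∀ g ∈ H, ∀ h ∈ H, ∀ a, g a = h a → g = h := by
      intro g hg h hh a hga
      ext1 c
      obtain ⟨r, hr, rfl⟩ := htr a c
      have h1 := congrArg (fun e : Equiv.Perm _ => e a) (hab g hg r hr)
      have h2 := congrArg (fun e : Equiv.Perm _ => e a) (hab h hh r hr)
      simp only [Equiv.Perm.mul_apply] at h1 h2
      rw [h1, h2, hga]
    have hrot' : ¬ ∃ h ∈ H, ∀ l < k+1, h (bb (k+1+1) (l+1)) = bb (k+1+1) l := by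
      rintro ⟨h, hh, hl⟩
      apply hrot
      have : finRotate (k+1+1) = h⁻¹ := by
        have hlt : ∀ l < k+1, finRotate (k+1+1) (bb (k+1+1) l) = h⁻¹ (bb (k+1+1) l) := by
          intro l hlk
          rw [← hl l hlk]
          have h1 : bb (k+1+1) l = ⟨l, by omega⟩ := by
            apply Fin.ext; simp [bb]; omega
          have h2 : bb (k+1+1) (l+1) = ⟨l+1, by omega⟩ := by
            apply Fin.ext; simp [bb]; omega
          rw [hl l hlk, Equiv.Perm.eq_inv_iff_eq, h1, finRotate_of_lt hlk, ← h2, hl l hlk, h1]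
        have hlt' : ∀ c : Fin (k+1+1), c.val < k+1 → finRotate (k+1+1) c = h⁻¹ c := by
          intro c hc
          have h1 : bb (k+1+1) c.val = c := by
            apply Fin.ext; simp [bb]
          rw [← h1]
          exact hlt _ hc
        ext1 c
        by_cases hc : c.val < k+1
        · exact hlt' c hc
        · by_cases hd : ((finRotate (k+1+1))⁻¹ (h⁻¹ c)).val < k+1
          · have h1 := hlt' _ hd
            replace h1 := ((Equiv.Perm.inv_eq_iff_eq).1 rfl).trans h1
            have h2 := h⁻¹.injective h1
            rw [← h2] at hd
            exact absurd hd hc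
          · have h1 : (finRotate (k+1+1))⁻¹ (h⁻¹ c) = c := by
              apply Fin.ext
              omega
            exact ((Equiv.Perm.inv_eq_iff_eq).1 h1).symm
      rw [this]
      exact H.inv_mem hh
    obtain ⟨j, hj⟩ := right_lemma hreg htr hab hrot' u
    obtain ⟨j', hj'⟩ := left_lemma hreg htr hab hrot' v
    obtain ⟨x, hxi, hxj⟩ := exists_ne_ne hn i j
    obtain ⟨y, hyi, hyj⟩ := exists_ne_ne hn i j'
    exact ⟨[x, x, y, y], frame_infix hn (fun g _ => B_nodup g) (hj x hxj) (hj' y hyj) hm hxi hyi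
      hu hv⟩
  · by_cases hfix : ∀ g ∈ H, g i = i
    · obtain ⟨x, hxi, -⟩ := exists_ne_ne hn i i
      exact ⟨[x], fixed_infix hxi hfix (hu u .refl) (hv v .refl)⟩
    · obtain ⟨x, hxi, hx⟩ := exists_not_orbit htr hfix (bb (k+1+1) (k+1))
      obtain ⟨y, hyi, hy⟩ := exists_not_orbit htr hfix (bb (k+1+1) 0)
      refine ⟨[x, x, y, y], frame_infix hn (fun g _ => B_nodup g) ?_ ?_ hm hxi hyi hu hv⟩
      · intro u' _ p g hg h
        rw [B_succ, ← List.append_assoc, List.append_singleton_inj] at h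
        exact hx g hg h.2.symm
      · intro v' _ q g hg h
        simp [B, List.range_succ_eq_map] at h
        exact hy g hg h.1.symm

end SnAux

theorem stmt12 (n : ℕ) (hn : 3 ≤ n) (H : Subgroup (Equiv.Perm (Fin n)))
    (hH : (¬ ∀ i j : Fin n, ∃ σ ∈ H, σ i = j) ∨
      ((∀ σ ∈ H, ∀ τ ∈ H, σ * τ = τ * σ) ∧ finRotate n ∉ H))
    (m : ℕ) (hm : 3 ≤ m) (i : Fin n) :
    MonoidIdeal.IsPrime
      {x : SnMonoid n ↑H | ∃ s t : SnMonoid n ↑H,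
        x = s * (aGen n ↑H i) ^ m * t} := by
  have : NeZero n := ⟨by omega⟩
  intro u v hu hv
  obtain ⟨u, rfl⟩ := Con.mk'_surjective (c := snCon n ↑H) u
  obtain ⟨v, rfl⟩ := Con.mk'_surjective (c := snCon n ↑H) v
  have hu' := fun h => hu ((SnAux.mem_iff n H m i u.toList).2 h)
  have hv' := fun h => hv ((SnAux.mem_iff n H m i v.toList).2 h)
  obtain ⟨s, hs⟩ := SnAux.core n hn H hH m (by omega) i u.toList v.toList
    (fun z h1 h2 => hu' ⟨z, h1, h2⟩) (fun z h1 h2 => hv' ⟨z, h1, h2⟩)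
  refine ⟨snPi n ↑H (FreeMonoid.ofList s), fun h => ?_⟩
  have h2 := (SnAux.mem_iff n H m i (u.toList ++ (s ++ v.toList))).1 (by
    obtain ⟨a, c, h⟩ := h
    refine ⟨a, c, ?_⟩
    rw [← h, FreeMonoid.ofList_append, FreeMonoid.ofList_append, map_mul, map_mul, mul_assoc]
    rfl)
  obtain ⟨z, hz, hz'⟩ := h2
  exact hs z hz hz'
end

section
/- Let n ≥ 3, let H be either a non-transitive subgroup of Sym_n or an abelian subgroup of Sym_n with (1,2,...,n) ∉ H, and let S = S_n(H), z = a_1⋯a_n. For every m ≥ 1, the ideal S z^m S is a prime ideal of S. -/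
section helpers

variable {n : ℕ}

/-- word of a permutation, as a list -/
def wd (σ : Equiv.Perm (Fin n)) : List (Fin n) := List.ofFn fun i => σ i

theorem wd_length (σ : Equiv.Perm (Fin n)) : (wd σ).length = n := by simp [wd]

theorem wd_get (σ : Equiv.Perm (Fin n)) (i : ℕ) (hi : i < n) :
    (wd σ)[i]? = some (σ ⟨i, hi⟩) := by
  simp [wd, hi]

/-- class map on lists -/
def pl (H : Subgroup (Equiv.Perm (Fin n))) (l : List (Fin n)) : SnMonoid n (H : Set (Equiv.Perm (Fin n))) :=
  snPi n H (FreeMonoid.ofList l)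

theorem pl_append (H : Subgroup (Equiv.Perm (Fin n))) (a b : List (Fin n)) :
    pl H (a ++ b) = pl H a * pl H b := by
  simp [pl, FreeMonoid.ofList_append]

theorem pl_surj (H : Subgroup (Equiv.Perm (Fin n))) (s : SnMonoid n (H : Set (Equiv.Perm (Fin n)))) :
    ∃ l, pl H l = s := by
  obtain ⟨w, hw⟩ := Con.mk'_surjective (c := snCon n (H : Set (Equiv.Perm (Fin n)))) s
  exact ⟨FreeMonoid.toList w, by simpa [pl, snPi] using hw⟩

theorem pl_wd (H : Subgroup (Equiv.Perm (Fin n))) {σ : Equiv.Perm (Fin n)} (hσ : σ ∈ H) :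
    pl H (wd σ) = zElem n H := by
  unfold pl zElem snPi
  symm
  apply (Con.eq _).2
  exact ConGen.Rel.of _ _ ⟨σ, hσ, rfl, rfl⟩

theorem pl_inv (H : Subgroup (Equiv.Perm (Fin n))) (P : List (Fin n) → Prop)
    (hP : ∀ a b σ τ, σ ∈ H → τ ∈ H → P (a ++ wd σ ++ b) → P (a ++ wd τ ++ b))
    {x y : List (Fin n)} (h : pl H x = pl H y) (hx : P x) : P y := by
  let C : Con (FreeMonoid (Fin n)) :=
    { r := fun x y => ∀ a b : List (Fin n), P (a ++ x.toList ++ b) ↔ P (a ++ y.toList ++ b)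
      iseqv := ⟨fun _ _ _ => Iff.rfl, fun h a b => (h a b).symm, fun h h' a b => (h a b).trans (h' a b)⟩
      mul' := by
        intro w x y z h1 h2 a b
        have e1 := h1 a (y.toList ++ b)
        have e2 := h2 (a ++ x.toList) b
        simp only [FreeMonoid.toList_mul, List.append_assoc] at *
        exact e1.trans e2 }
  have hle : snCon n (H : Set (Equiv.Perm (Fin n))) ≤ C := by
    apply Con.conGen_le.2
    rintro a b ⟨σ, hσ, rfl, rfl⟩ c d
    exact ⟨hP c d 1 σ H.one_mem hσ, hP c d σ 1 hσ H.one_mem⟩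
  have h' : snCon n (H : Set (Equiv.Perm (Fin n))) (FreeMonoid.ofList x) (FreeMonoid.ofList y) :=
    (Con.eq _).1 h
  have := hle h' [] []
  simp at this
  exact this.1 hx

theorem pl_step (H : Subgroup (Equiv.Perm (Fin n))) (a b : List (Fin n)) {σ τ : Equiv.Perm (Fin n)}
    (hσ : σ ∈ H) (hτ : τ ∈ H) : pl H (a ++ wd σ ++ b) = pl H (a ++ wd τ ++ b) := by
  simp only [pl_append, pl_wd H hσ, pl_wd H hτ]

/-- shift set -/
def GoodD (H : Subgroup (Equiv.Perm (Fin n))) (d : ℕ) : Prop :=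
  0 < d ∧ d ≤ n ∧ ∃ ρ ∈ H, ∀ x : Fin n, d ≤ x.val → (ρ x).val + d = x.val

theorem good_n (H : Subgroup (Equiv.Perm (Fin n))) (hn : 0 < n) : GoodD H n :=
  ⟨hn, le_rfl, 1, H.one_mem, fun x hx => absurd x.2 (by omega)⟩

theorem shift_ext (H : Subgroup (Equiv.Perm (Fin n)))
    (hc : ∀ σ ∈ H, ∀ τ ∈ H, σ * τ = τ * σ) {e g : ℕ} (he : GoodD H e)
    (β : Equiv.Perm (Fin n)) (hβ : β ∈ H)
    (h : ∀ y : Fin n, g ≤ y.val → n ≤ y.val + e → (β y).val + g = y.val) :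
    ∀ y : Fin n, g ≤ y.val → (β y).val + g = y.val := by
  obtain ⟨he0, hen, ρ, hρ, hr⟩ := he
  have key : ∀ k : ℕ, ∀ y : Fin n, n - y.val ≤ k → g ≤ y.val → (β y).val + g = y.val := by
    intro k
    induction k with
    | zero => intro y hy; have := y.2; omega
    | succ k ih =>
      intro y hy hg
      by_cases hye : n ≤ y.val + e
      · exact h y hg hye
      · have hlt : y.val + e < n := by omega
        let y' : Fin n := ⟨y.val + e, hlt⟩
        have h1 : (β y').val + g = y.val + e := ih y' (by simp only [y']; omega) (by simp only [y']; omega)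
        have h2 : ρ y' = y := by
          have := hr y' (by simp [y'])
          apply Fin.ext
          simp only [y'] at this ⊢
          omega
        have h3 : ρ (β y') = β y := by
          have := congrArg (fun f : Equiv.Perm (Fin n) => f y') (hc ρ hρ β hβ)
          simp only [Equiv.Perm.mul_apply] at this
          rw [this, h2]
        have h4 := hr (β y') (by omega)
        rw [h3] at h4
        omega
  intro y
  exact key _ y le_rfl

/-- shape of words congruent to something ending in an H-word -/
inductive QS (H : Subgroup (Equiv.Perm (Fin n))) : List (Fin n) → Prop
  | base (h : List (Fin n)) (σ : Equiv.Perm (Fin n)) (hσ : σ ∈ H) : QS H (h ++ wd σ)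
  | step (l : List (Fin n)) (τ : Equiv.Perm (Fin n)) (d : ℕ) (hτ : τ ∈ H) (hl : QS H l)
      (hd : GoodD H d) : QS H (l ++ (wd τ).drop (n - d))

theorem QS.suffix {H : Subgroup (Equiv.Perm (Fin n))} (hn : 0 < n) {l : List (Fin n)} (h : QS H l) :
    ∃ l' τ d, τ ∈ H ∧ GoodD H d ∧ l = l' ++ (wd τ).drop (n - d) := by
  cases h with
  | base h σ hσ => exact ⟨h, σ, n, hσ, good_n H hn, by simp⟩
  | step l τ d hτ hl hd => exact ⟨l, τ, d, hτ, hd, rfl⟩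

theorem QS.good {H : Subgroup (Equiv.Perm (Fin n))}
    (hc : ∀ σ ∈ H, ∀ τ ∈ H, σ * τ = τ * σ) {l : List (Fin n)} (h : QS H l)
    {a : List (Fin n)} {ω : Equiv.Perm (Fin n)} (hω : ω ∈ H) {f : ℕ} (hf0 : 0 < f) (hfn : f < n)
    (e : l = a ++ (wd ω).take (n - f)) : GoodD H f := by
  obtain ⟨l', τ, d, hτ, hd, rfl⟩ := h.suffix (by omega)
  refine ⟨hf0, hfn.le, ω⁻¹ * τ, H.mul_mem (H.inv_mem hω) hτ, ?_⟩
  apply shift_ext H hc hd _ (H.mul_mem (H.inv_mem hω) hτ)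
  intro y hy hyd
  have hd2 := hd.2.1
  have hlen := congrArg List.length e
  simp only [List.length_append, List.length_drop, List.length_take, wd_length] at hlen
  have hyn := y.2
  have hg := congrArg (fun t : List (Fin n) => t[a.length + (y.val - f)]?) e
  beta_reduce at hg
  rw [List.getElem?_append_right (by omega), List.getElem?_append_right (by omega),
    List.getElem?_drop, List.getElem?_take_of_lt (by omega)] at hg
  have i1 : n - d + (a.length + (y.val - f) - l'.length) = y.val := by omega
  have i2 : a.length + (y.val - f) - a.length = y.val - f := by omega
  rw [i1, i2, wd_get _ _ hyn, wd_get _ _ (by omega)] at hg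
  have hg' := Option.some.inj hg
  have : (ω⁻¹ * τ) y = ⟨y.val - f, by omega⟩ := by
    rw [Equiv.Perm.mul_apply, Equiv.Perm.inv_eq_iff_eq]
    exact hg'
  rw [this]
  simp only
  omega

theorem append_split_right {α : Type*} {l t a b : List α} (h : l ++ t = a ++ b)
    (hb : t.length ≤ b.length) : ∃ b', b = b' ++ t ∧ l = a ++ b' := by
  rcases List.append_eq_append_iff.1 h with ⟨c, h1, h2⟩ | ⟨c, h1, h2⟩
  · have : c = [] := by
      have := congrArg List.length h2
      simp at this
      exact List.length_eq_zero_iff.1 (by omega)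
    subst this
    exact ⟨[], by simpa using h2.symm, by simpa using h1.symm⟩
  · exact ⟨c, h2, h1⟩

theorem append_split_left {α : Type*} {l t a b : List α} (h : l ++ t = a ++ b)
    (hb : b.length ≤ t.length) : ∃ c, t = c ++ b ∧ a = l ++ c :=
  append_split_right h.symm hb

theorem QS.closed {H : Subgroup (Equiv.Perm (Fin n))}
    (hc : ∀ σ ∈ H, ∀ τ ∈ H, σ * τ = τ * σ) {l : List (Fin n)} (h : QS H l) :
    ∀ (a b : List (Fin n)) (ω ω' : Equiv.Perm (Fin n)), ω ∈ H → ω' ∈ H →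
      l = a ++ wd ω ++ b → QS H (a ++ wd ω' ++ b) := by
  induction h with
  | base h σ hσ =>
    intro a b ω ω' hω hω' e
    rcases le_or_gt n b.length with hb | hb
    · obtain ⟨b', rfl, -⟩ := append_split_right e (by rwa [wd_length])
      rw [← List.append_assoc]
      exact QS.base _ _ hσ
    · rcases Nat.eq_zero_or_pos b.length with h0 | h0
      · rw [List.length_eq_zero_iff.1 h0, List.append_nil]
        exact QS.base _ _ hω'
      · obtain ⟨c, h1, h2⟩ := append_split_left e (by rw [wd_length]; omega)
        have hcl : c.length = n - b.length := by
          have := congrArg List.length h1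
          rw [wd_length, List.length_append] at this
          omega
        have hbe : b = (wd σ).drop (n - b.length) := by
          rw [h1, ← hcl]; simp
        have hce : c = (wd σ).take (n - b.length) := by
          rw [h1, ← hcl]; simp
        have hgood : GoodD H b.length := by
          refine QS.good hc (QS.base a ω hω) (a := h) hσ h0 hb ?_
          rw [← hce]; exact h2
        rw [hbe]
        exact QS.step _ _ _ hσ (QS.base _ _ hω') hgood
  | step l τ d hτ hl hd ih =>
    intro a b ω ω' hω hω' e
    have hdn := hd.2.1
    have hd0 := hd.1
    rcases le_or_gt d b.length with hb | hb
    · obtain ⟨b', rfl, h2⟩ := append_split_right e (by rw [List.length_drop, wd_length]; omega)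
      rw [← List.append_assoc]
      exact QS.step _ _ _ hτ (ih a b' ω ω' hω hω' h2) hd
    · rcases Nat.eq_zero_or_pos b.length with h0 | h0
      · rw [List.length_eq_zero_iff.1 h0, List.append_nil]
        exact QS.base _ _ hω'
      · obtain ⟨c, h1, h2⟩ := append_split_left e (by rw [List.length_drop, wd_length]; omega)
        have hcl : c.length = d - b.length := by
          have := congrArg List.length h1
          rw [List.length_drop, wd_length, List.length_append] at this
          omega
        have hbe : b = (wd τ).drop (n - b.length) := by
          have : ((wd τ).drop (n - d)).drop c.length = b := by rw [h1]; simp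
          rw [← this, List.drop_drop]
          congr 1
          rw [List.length_drop, wd_length]; omega
        obtain ⟨c', h3, h4⟩ := append_split_right h2.symm (t := c) (l := l) (by rw [wd_length]; omega)
        have hc'l : c'.length = n - c.length := by
          have := congrArg List.length h3
          rw [wd_length, List.length_append] at this
          omega
        have hgf : GoodD H c.length := by
          refine QS.good hc hl (a := a) hω (by omega) (by omega) ?_
          rw [← hc'l, h3]; simpa using h4
        have hgood : GoodD H b.length := by
          refine ⟨h0, by omega, τ⁻¹ * ω, H.mul_mem (H.inv_mem hτ) hω, ?_⟩
          apply shift_ext H hc hgf _ (H.mul_mem (H.inv_mem hτ) hω)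
          intro y hy hyd
          have hyn := y.2
          have g1 : (c)[(y.val + c.length - n)]? = some (ω y) := by
            have := wd_get ω y.val hyn
            rw [h3, List.getElem?_append_right (by omega)] at this
            rw [← this]; congr 1; omega
          have g2 : (c)[(y.val + c.length - n)]? = some (τ ⟨y.val - b.length, by omega⟩) := by
            have := wd_get τ (y.val - b.length) (by omega)
            rw [← this]
            have h5 : ((wd τ).drop (n - d))[y.val + c.length - n]? = (c)[y.val + c.length - n]? := by
              rw [h1, List.getElem?_append_left (by omega)]
            rw [← h5, List.getElem?_drop]
            congr 1; omega
          rw [g1] at g2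
          have : (τ⁻¹ * ω) y = ⟨y.val - b.length, by omega⟩ := by
            rw [Equiv.Perm.mul_apply, Equiv.Perm.inv_eq_iff_eq]
            exact Option.some.inj g2
          rw [this]
          simp only
          omega
        rw [hbe]
        exact QS.step _ _ _ hτ (QS.base _ _ hω') hgood

theorem not_good_one (H : Subgroup (Equiv.Perm (Fin n))) (hn : 3 ≤ n) (hr : finRotate n ∉ H) :
    ¬ GoodD H 1 := by
  rintro ⟨-, -, ρ, hρ, h⟩
  apply hr
  obtain ⟨k, rfl⟩ : ∃ k, n = k + 1 := ⟨n - 1, by omega⟩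
  have key : ∀ i : Fin (k + 1), i ≠ Fin.last k → ρ (i + 1) = i := by
    intro i hi
    have hlt : i.val < k := Fin.val_lt_last hi
    have hv : (i + 1).val = i.val + 1 := Fin.val_add_one_of_lt (Fin.lt_last_iff_ne_last.2 hi)
    have := h (i + 1) (by omega)
    apply Fin.ext; omega
  have key2 : ρ 0 = Fin.last k := by
    by_contra hne
    have := key (ρ 0) hne
    have h0 := ρ.injective this
    have hv : (ρ 0 + 1).val = (ρ 0).val + 1 := Fin.val_add_one_of_lt (Fin.lt_last_iff_ne_last.2 hne)
    rw [h0] at hv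
    simp at hv
  have : finRotate (k + 1) = ρ⁻¹ := by
    ext i : 1
    rw [Equiv.Perm.eq_inv_iff_eq, finRotate_apply]
    by_cases hi : i = Fin.last k
    · subst hi; simpa using key2
    · exact key i hi
  rw [this]
  exact H.inv_mem hρ

/-- the standing hypothesis -/
def Hyp (H : Subgroup (Equiv.Perm (Fin n))) : Prop :=
  (¬ ∀ i j : Fin n, ∃ σ ∈ H, σ i = j) ∨
      ((∀ σ ∈ H, ∀ τ ∈ H, σ * τ = τ * σ) ∧ finRotate n ∉ H)

theorem wd_end {l a : List (Fin n)} {x : Fin n} {σ : Equiv.Perm (Fin n)} (hn : 0 < n)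
    (h : l ++ [x] = a ++ wd σ) :
    x = σ ⟨n - 1, by omega⟩ ∧ l = a ++ (wd σ).take (n - 1) := by
  obtain ⟨c, h1, h2⟩ := append_split_right h (by rw [wd_length]; simp; omega)
  have hl : c.length = n - 1 := by
    have := congrArg List.length h1
    rw [wd_length, List.length_append, List.length_singleton] at this
    omega
  constructor
  · have := wd_get σ (n - 1) (by omega)
    rw [h1, List.getElem?_append_right (by omega), hl, Nat.sub_self] at this
    simpa using this
  · rw [h2, h1, ← hl]; simp

theorem exists_barrier (hn : 3 ≤ n) (H : Subgroup (Equiv.Perm (Fin n))) (hH : Hyp H)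
    (u : List (Fin n)) :
    ∃ x : Fin n, ∀ p, pl H p = pl H u → ∀ a, ∀ σ ∈ H, p ++ [x] ≠ a ++ wd σ := by
  by_cases htr : ∀ i j : Fin n, ∃ σ ∈ H, σ i = j
  swap
  · have : ∃ x : Fin n, ∀ σ ∈ H, σ ⟨n - 1, by omega⟩ ≠ x := by
      by_contra hcon
      push Not at hcon
      apply htr
      intro i j
      obtain ⟨σ, hσ, h1⟩ := hcon i
      obtain ⟨τ, hτ, h2⟩ := hcon j
      refine ⟨τ * σ⁻¹, H.mul_mem hτ (H.inv_mem hσ), ?_⟩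
      rw [← h1]; simpa using h2
    obtain ⟨x, hx⟩ := this
    refine ⟨x, fun p _ a σ hσ e => hx σ hσ ?_⟩
    exact (wd_end (by omega) e).1.symm
  · obtain ⟨hc, hr⟩ := hH.resolve_left (not_not_intro htr)
    have hreg : ∀ σ ∈ H, ∀ τ ∈ H, ∀ i, σ i = τ i → σ = τ := by
      intro σ hσ τ hτ i hi
      ext j : 1
      obtain ⟨π, hπ, rfl⟩ := htr i j
      have e1 := congrArg (fun f : Equiv.Perm (Fin n) => f i) (hc σ hσ π hπ)
      have e2 := congrArg (fun f : Equiv.Perm (Fin n) => f i) (hc τ hτ π hπ)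
      simp only [Equiv.Perm.mul_apply] at e1 e2
      rw [e1, e2, hi]
    by_cases hE : ∃ h σ, σ ∈ H ∧ pl H (h ++ wd σ) = pl H u
    · obtain ⟨h, σ, hσ, hu⟩ := hE
      refine ⟨⟨0, by omega⟩, fun p hp a ω hω e => ?_⟩
      have hQ : QS H p := by
        refine pl_inv H (QS H) ?_ (hu.trans hp.symm) (QS.base _ _ hσ)
        intro a b σ τ hσ hτ h
        exact h.closed hc a b σ τ hσ hτ rfl
      exact not_good_one H hn hr
        (hQ.good hc hω (by omega) (by omega) (wd_end (by omega) e).2)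
    · push Not at hE
      have hlast : ∀ p, pl H p = pl H u → p.getLast? = u.getLast? := by
        intro p hp
        refine (pl_inv H (fun l => pl H l = pl H u ∧ l.getLast? = u.getLast?) ?_ hp.symm ⟨rfl, rfl⟩).2
        rintro a b σ τ hσ hτ ⟨h1, h2⟩
        refine ⟨(pl_step H a b hτ hσ).trans h1, ?_⟩
        rw [← h2]
        rcases List.eq_nil_or_concat b with rfl | ⟨b', y, rfl⟩
        · exact absurd (by simpa using h1) (hE a σ hσ)
        · simp [← List.append_assoc]
      by_contra hcon
      push Not at hcon
      obtain ⟨p0, hp0, a0, σ0, hσ0, e0⟩ := hcon ⟨0, by omega⟩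
      obtain ⟨p1, hp1, a1, σ1, hσ1, e1⟩ := hcon ⟨1, by omega⟩
      obtain ⟨x0, f0⟩ := wd_end (by omega) e0
      obtain ⟨x1, f1⟩ := wd_end (by omega) e1
      have gl : ∀ (a : List (Fin n)) (σ : Equiv.Perm (Fin n)),
          (a ++ (wd σ).take (n - 1)).getLast? = some (σ ⟨n - 2, by omega⟩) := by
        intro a σ
        rw [List.getLast?_eq_getElem?, List.getElem?_append_right (by
          simp only [List.length_append, List.length_take, wd_length]; omega),
          List.getElem?_take_of_lt (by
          simp only [List.length_append, List.length_take, wd_length]; omega)]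
        rw [← wd_get]
        congr 1
        simp only [List.length_append, List.length_take, wd_length]; omega
      have l0 := hlast p0 hp0
      have l1 := hlast p1 hp1
      rw [f0, gl] at l0
      rw [f1, gl, ← l0] at l1
      have := hreg _ hσ1 _ hσ0 _ (Option.some.inj l1)
      rw [this, ← x0] at x1
      simp at x1

/-- conjugate of H by the order reversal -/
def revH (H : Subgroup (Equiv.Perm (Fin n))) : Subgroup (Equiv.Perm (Fin n)) :=
  H.comap (MulAut.conj (Fin.revPerm : Equiv.Perm (Fin n))).toMonoidHom

theorem mem_revH (H : Subgroup (Equiv.Perm (Fin n))) (σ : Equiv.Perm (Fin n)) :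
    σ ∈ revH H ↔ Fin.revPerm * σ * Fin.revPerm⁻¹ ∈ H := Iff.rfl

theorem rev_inv : (Fin.revPerm : Equiv.Perm (Fin n))⁻¹ = Fin.revPerm := by
  ext i; rfl

theorem rev_mul : (Fin.revPerm : Equiv.Perm (Fin n)) * Fin.revPerm = 1 := by
  ext i; simp

theorem mem_revH' (H : Subgroup (Equiv.Perm (Fin n))) {σ : Equiv.Perm (Fin n)} (h : σ ∈ H) :
    Fin.revPerm * σ * Fin.revPerm ∈ revH H := by
  rw [mem_revH, rev_inv]
  have : (Fin.revPerm : Equiv.Perm (Fin n)) * (Fin.revPerm * σ * Fin.revPerm) * Fin.revPerm = σ := by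
    ext i; simp
  rwa [this]

/-- reversal with relabelling -/
def Phi (l : List (Fin n)) : List (Fin n) := l.reverse.map Fin.rev

theorem Phi_append (a b : List (Fin n)) : Phi (a ++ b) = Phi b ++ Phi a := by simp [Phi]

theorem Phi_wd (σ : Equiv.Perm (Fin n)) : Phi (wd σ) = wd (Fin.revPerm * σ * Fin.revPerm) := by
  apply List.ext_getElem?
  intro i
  by_cases hi : i < n
  · rw [wd_get _ _ hi]
    unfold Phi
    rw [List.getElem?_map, List.getElem?_reverse (by rwa [wd_length]), wd_length,
      wd_get _ _ (by omega)]
    simp only [Option.map_some, Equiv.Perm.mul_apply, Fin.revPerm_apply]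
    congr 4
    simp only
    omega
  · rw [List.getElem?_eq_none (by simp [Phi, wd_length]; omega),
      List.getElem?_eq_none (by simp [wd_length]; omega)]

theorem hyp_rev (hn : 3 ≤ n) (H : Subgroup (Equiv.Perm (Fin n))) (hH : Hyp H) : Hyp (revH H) := by
  rcases hH with h | ⟨hc, hr⟩
  · left
    intro h'
    apply h
    intro i j
    obtain ⟨σ, hσ, e⟩ := h' i.rev j.rev
    refine ⟨_, (mem_revH H σ).1 hσ, ?_⟩
    rw [rev_inv]
    simp [e]
  · right
    constructor
    · intro σ hσ τ hτ
      have := hc _ hσ _ hτ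
      exact (MulAut.conj (Fin.revPerm : Equiv.Perm (Fin n))).injective (by simpa using this)
    · intro h
      apply hr
      rw [mem_revH, rev_inv] at h
      have : finRotate n = (Fin.revPerm * finRotate n * Fin.revPerm)⁻¹ := by
        obtain ⟨k, rfl⟩ : ∃ k, n = k + 1 := ⟨n - 1, by omega⟩
        ext i : 1
        rw [Equiv.Perm.eq_inv_iff_eq]
        simp only [Equiv.Perm.mul_apply, Fin.revPerm_apply, finRotate_apply]
        by_cases hi : i = Fin.last k
        · subst hi; simp
        · have hv : (i + 1).val = i.val + 1 :=
            Fin.val_add_one_of_lt (Fin.lt_last_iff_ne_last.2 hi)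
          have hlt : i.val < k := Fin.val_lt_last hi
          have hne : (i + 1).rev ≠ Fin.last k := by
            intro h
            have := congrArg Fin.val h
            rw [Fin.val_rev, hv] at this
            simp at this
            omega
          have hv2 := Fin.val_add_one_of_lt (Fin.lt_last_iff_ne_last.2 hne)
          apply Fin.ext
          rw [Fin.val_rev, hv2, Fin.val_rev, hv]
          omega
      rw [this]
      exact H.inv_mem h

theorem exists_barrier_left (hn : 3 ≤ n) (H : Subgroup (Equiv.Perm (Fin n))) (hH : Hyp H)
    (v : List (Fin n)) :
    ∃ y : Fin n, ∀ q, pl H q = pl H v → ∀ b, ∀ σ ∈ H, [y] ++ q ≠ wd σ ++ b := by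
  obtain ⟨x, hx⟩ := exists_barrier hn (revH H) (hyp_rev hn H hH) (Phi v)
  refine ⟨x.rev, fun q hq b σ hσ e => ?_⟩
  have h1 : pl (revH H) (Phi q) = pl (revH H) (Phi v) := by
    refine pl_inv H (fun l => pl (revH H) (Phi l) = pl (revH H) (Phi v)) ?_ hq.symm rfl
    intro a b σ τ hσ hτ h
    rw [← h]
    simp only [Phi_append, Phi_wd, pl_append, pl_wd _ (mem_revH' H hσ), pl_wd _ (mem_revH' H hτ)]
  apply hx (Phi q) h1 (Phi b) _ (mem_revH' H hσ)
  have := congrArg Phi e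
  rw [Phi_append, Phi_append, Phi_wd] at this
  rw [← this]
  simp [Phi]

theorem no_rep {a b p q : List (Fin n)} {x : Fin n} {σ : Equiv.Perm (Fin n)}
    (e : p ++ [x, x] ++ q = a ++ wd σ ++ b) (h1 : a.length ≤ p.length)
    (h2 : p.length + 2 ≤ a.length + n) : False := by
  have key : ∀ j, p.length ≤ j → j < p.length + 2 → (h : j - a.length < n) →
      σ ⟨j - a.length, h⟩ = x := by
    intro j hj hj2 h
    have e' := congrArg (fun t : List (Fin n) => t[j]?) e
    beta_reduce at e'
    rw [List.append_assoc, List.append_assoc, List.getElem?_append_right hj,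
      List.getElem?_append_left (by simp; omega),
      List.getElem?_append_right (by omega), List.getElem?_append_left (by rw [wd_length]; omega),
      wd_get _ _ h] at e'
    obtain h0 | h0 : j - p.length = 0 ∨ j - p.length = 1 := by omega
    all_goals
      rw [h0] at e'
      simpa using e'.symm
  have k1 := key p.length le_rfl (by omega) (by omega)
  have k2 := key (p.length + 1) (by omega) (by omega) (by omega)
  have := congrArg Fin.val (σ.injective (k1.trans k2.symm))
  simp only at this
  omega

theorem split_main (hn : 3 ≤ n) {a b p q : List (Fin n)} {x y : Fin n} {σ : Equiv.Perm (Fin n)}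
    (hx : ∀ a, p ++ [x] ≠ a ++ wd σ) (hy : ∀ b, [y] ++ q ≠ wd σ ++ b)
    (e : p ++ [x, x, y, y] ++ q = a ++ wd σ ++ b) :
    (∃ c, p = a ++ wd σ ++ c ∧ b = c ++ [x, x, y, y] ++ q) ∨
    (∃ c, q = c ++ wd σ ++ b ∧ a = p ++ [x, x, y, y] ++ c) := by
  have hlen := congrArg List.length e
  simp only [List.length_append, wd_length, List.length_cons, List.length_nil] at hlen
  by_cases c1 : a.length + n ≤ p.length
  · left
    rw [List.append_assoc] at e
    obtain ⟨c', h3, h4⟩ := append_split_left (l := a ++ wd σ) (t := b) (a := p)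
      (b := [x, x, y, y] ++ q) e.symm (by simp; omega)
    exact ⟨c', h4, by rw [h3, List.append_assoc]⟩
  by_cases c2 : p.length + 4 ≤ a.length
  · right
    rw [List.append_assoc a] at e
    obtain ⟨c, h1, h2⟩ := append_split_left e (by simp [wd_length]; omega)
    exact ⟨c, by rw [h1, List.append_assoc], h2⟩
  exfalso
  by_cases c3 : a.length + n = p.length + 1
  · have e' : (p ++ [x]) ++ ([x, y, y] ++ q) = (a ++ wd σ) ++ b := by simpa using e
    exact hx a (List.append_inj_left e' (by simp [wd_length]; omega))
  by_cases c4 : a.length = p.length + 3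
  · have e' : (p ++ [x, x, y]) ++ ([y] ++ q) = a ++ (wd σ ++ b) := by simpa using e
    exact hy b (List.append_inj_right e' (by simp; omega))
  by_cases c5 : a.length ≤ p.length
  · exact no_rep (p := p) (q := [y, y] ++ q) (x := x) (a := a) (b := b) (σ := σ)
      (by simpa using e) c5 (by omega)
  · exact no_rep (p := p ++ [x, x]) (q := q) (x := y) (a := a) (b := b) (σ := σ)
      (by simpa using e) (by simp; omega) (by simp; omega)

/-- power of the word z -/
def zw (n : ℕ) : ℕ → List (Fin n)
  | 0 => []
  | m + 1 => wd 1 ++ zw n m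

theorem pl_zw (H : Subgroup (Equiv.Perm (Fin n))) (m : ℕ) : pl H (zw n m) = zElem n H ^ m := by
  induction m with
  | zero => simp [zw, pl]
  | succ m ih => rw [zw, pl_append, pl_wd H H.one_mem, ih, pow_succ']

theorem split_pow (hn : 3 ≤ n) {p q : List (Fin n)} {x y : Fin n}
    (hx : ∀ a, p ++ [x] ≠ a ++ wd 1) (hy : ∀ b, [y] ++ q ≠ wd 1 ++ b) (b : List (Fin n)) (m : ℕ) :
    ∀ a, p ++ [x, x, y, y] ++ q = a ++ zw n (m + 1) ++ b →
    (∃ c, p = a ++ zw n (m + 1) ++ c) ∨ (∃ c, q = c ++ zw n (m + 1) ++ b) := by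
  induction m with
  | zero =>
    intro a e
    simp only [zw, List.append_nil] at e ⊢
    rcases split_main hn hx hy e with ⟨c, h, -⟩ | ⟨c, h, -⟩
    · exact Or.inl ⟨c, h⟩
    · exact Or.inr ⟨c, h⟩
  | succ m ih =>
    intro a e
    rw [zw] at e ⊢
    have e1 : p ++ [x, x, y, y] ++ q = a ++ wd 1 ++ (zw n (m + 1) ++ b) := by
      rw [e]; simp
    rcases split_main hn hx hy e1 with ⟨c, h, -⟩ | ⟨c, h, -⟩
    · rcases ih (a ++ wd 1) (by rw [e]; simp) with ⟨c', h'⟩ | ⟨c', h'⟩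
      · exact Or.inl ⟨c', by rw [h']; simp⟩
      · exfalso
        have l1 := congrArg List.length e
        have l2 := congrArg List.length h
        have l3 := congrArg List.length h'
        simp only [List.length_append, List.length_cons, List.length_nil] at l1 l2 l3
        omega
    · exact Or.inr ⟨c, by rw [h]; simp⟩

end helpers


theorem stmt13 (n : ℕ) (hn : 3 ≤ n) (H : Subgroup (Equiv.Perm (Fin n)))
    (hH : (¬ ∀ i j : Fin n, ∃ σ ∈ H, σ i = j) ∨
      ((∀ σ ∈ H, ∀ τ ∈ H, σ * τ = τ * σ) ∧ finRotate n ∉ H))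
    (m : ℕ) (hm : 1 ≤ m) :
    MonoidIdeal.IsPrime
      {x : SnMonoid n ↑H | ∃ s t : SnMonoid n ↑H,
        x = s * (zElem n ↑H) ^ m * t} := by
  intro u' v' hu' hv'
  obtain ⟨u, rfl⟩ := pl_surj H u'
  obtain ⟨v, rfl⟩ := pl_surj H v'
  obtain ⟨x, hx⟩ := exists_barrier hn H hH u
  obtain ⟨y, hy⟩ := exists_barrier_left hn H hH v
  refine ⟨pl H [x, x, y, y], ?_⟩
  rintro ⟨s, t, e⟩
  obtain ⟨a, rfl⟩ := pl_surj H s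
  obtain ⟨b, rfl⟩ := pl_surj H t
  rw [← pl_zw, ← pl_append, ← pl_append, ← pl_append, ← pl_append] at e
  obtain ⟨m, rfl⟩ : ∃ k, m = k + 1 := ⟨m - 1, by omega⟩
  have key := pl_inv H
    (fun l => ∃ p q, pl H p = pl H u ∧ pl H q = pl H v ∧ l = p ++ [x, x, y, y] ++ q) ?_ e
    ⟨u, v, rfl, rfl, rfl⟩
  · obtain ⟨p, q, hp, hq, e'⟩ := key
    rcases split_pow hn (fun a => hx p hp a 1 H.one_mem) (fun b => hy q hq b 1 H.one_mem) b m a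
      e'.symm with ⟨c, h⟩ | ⟨c, h⟩
    · exact hu' ⟨pl H a, pl H c, by rw [← pl_zw, ← pl_append, ← pl_append, ← h, hp]⟩
    · exact hv' ⟨pl H c, pl H b, by rw [← pl_zw, ← pl_append, ← pl_append, ← h, hq]⟩
  · rintro a b σ τ hσ hτ ⟨p, q, hp, hq, e'⟩
    rcases split_main hn (fun a => hx p hp a σ hσ) (fun b => hy q hq b σ hσ) e'.symm with
      ⟨c, h1, h2⟩ | ⟨c, h1, h2⟩
    · refine ⟨a ++ wd τ ++ c, q, ?_, hq, by rw [h2]; simp⟩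
      rw [← hp, h1]; exact pl_step H a c hτ hσ
    · refine ⟨p, c ++ wd τ ++ b, hp, ?_, by rw [h2]; simp⟩
      rw [← hq, h1]; exact pl_step H c b hτ hσ
end
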